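/- arXiv:1403.7033 — 4 statements merged into one kernel-verified Lean document; each statement's English description precedes it below -/
import Mathlib

section
/- (Helson's inequality.) Let N ≥ 1 and let f(w) = ∑_{α ∈ ℕ₀^N} c_α w^α be a polynomial in N complex variables (only finitely many c_α nonzero). Then (∑_{α ∈ ℕ₀^N} |c_α|² / ∏_{j=1}^N (α_j+1))^{1/2} ≤ ∫_{𝕋^N} |f(w)| dσ(w), where σ is the normalized Haar (product Lebesgue) measure on the N-torus 𝕋^N = {w ∈ ℂ^N : |w_j| = 1 for all j}. -/
open Finset MeasureTheory Real

/-!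
Carleman's argument settles one variable. Up to a constant, a polynomial `f` is a product of
factors `z - a`. If `|a| ≥ 1`, such a factor is the square of a function analytic in the disc; if
`|a| < 1`, the Blaschke factor of `a` times `1 - conj a * z` gives `z - a`, and `1 - conj a * z` is
a square with modulus `|z - a|` on the circle. Hence `f = u * v` with `|u|² = |v|² = |f|` on the
circle. The Taylor coefficients of `f` are Cauchy products of those of `u` and `v`, so
Cauchy–Schwarz (each Cauchy product of order `n` has `n + 1` terms) and Bessel's inequality bound
`∑ |c_n|² / (n + 1)` by `‖u‖₂² ‖v‖₂² = ‖f‖₁²`. Bounds of this shape, weighted `ℓ²` by `L¹`,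
tensorize: Minkowski's integral inequality interchanges the `L¹`-norm in one variable with the
`ℓ²`-norm in the others.
-/

lemma sum_antidiagonal_range_le {G : Type*} [AddCommMonoid G] [PartialOrder G]
    [IsOrderedAddMonoid G] {a : ℕ × ℕ → G} (ha : ∀ p, 0 ≤ a p) (M : ℕ) :
    ∑ n ∈ range M, ∑ p ∈ antidiagonal n, a p ≤ ∑ p ∈ range M ×ˢ range M, a p := by
  have fiber_eq : ∀ n ∈ range M,
      {p ∈ range M ×ˢ range M | p.1 + p.2 = n} = antidiagonal n := by
    intro n hn
    ext p
    simp only [mem_filter, mem_product, mem_range, HasAntidiagonal.mem_antidiagonal] at hn ⊢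
    omega
  calc ∑ n ∈ range M, ∑ p ∈ antidiagonal n, a p
      = ∑ n ∈ range M, ∑ p ∈ range M ×ˢ range M with p.1 + p.2 = n, a p :=
        sum_congr rfl fun n hn => by rw [fiber_eq n hn]
    _ ≤ ∑ p ∈ range M ×ˢ range M, a p :=
        sum_fiberwise_le_sum_of_sum_fiber_nonneg fun _ _ => sum_nonneg fun _ _ => ha _

lemma sq_norm_sum_antidiagonal_div_le {R : Type*} [NonUnitalSeminormedRing R] (a b : ℕ → R)
    (n : ℕ) :
    ‖∑ p ∈ antidiagonal n, a p.1 * b p.2‖ ^ 2 / ((n : ℝ) + 1) ≤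
      ∑ p ∈ antidiagonal n, ‖a p.1‖ ^ 2 * ‖b p.2‖ ^ 2 := by
  rw [div_le_iff₀' (by positivity)]
  calc ‖∑ p ∈ antidiagonal n, a p.1 * b p.2‖ ^ 2
      ≤ (∑ p ∈ antidiagonal n, ‖a p.1‖ * ‖b p.2‖) ^ 2 := by
        gcongr
        exact norm_sum_le_of_le _ fun p _ => norm_mul_le _ _
    _ ≤ (n + 1) * ∑ p ∈ antidiagonal n, ‖a p.1‖ ^ 2 * ‖b p.2‖ ^ 2 := by
        simpa [mul_pow] using sq_sum_le_card_mul_sum_sq (s := antidiagonal n)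
          (f := fun p => ‖a p.1‖ * ‖b p.2‖)

section TaylorCoeff

variable {𝕜 : Type*} [NontriviallyNormedField 𝕜]

/-- The `n`-th Taylor coefficient at the origin of a function of one variable. -/
noncomputable def taylorCoeff (f : 𝕜 → 𝕜) (n : ℕ) : 𝕜 := iteratedDeriv n f 0 / n.factorial

lemma taylorCoeff_mul [CharZero 𝕜] {f g : 𝕜 → 𝕜} {n : ℕ} (hf : ContDiffAt 𝕜 n f 0)
    (hg : ContDiffAt 𝕜 n g 0) :
    taylorCoeff (f * g) n = ∑ p ∈ antidiagonal n, taylorCoeff f p.1 * taylorCoeff g p.2 := by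
  simp only [taylorCoeff, iteratedDeriv_mul hf hg, sum_div,
    Finset.Nat.sum_antidiagonal_eq_sum_range_succ_mk, Nat.succ_eq_add_one]
  refine sum_congr rfl fun k hk => ?_
  rw [Nat.cast_choose _ (mem_range_succ_iff.mp hk)]
  field_simp [Nat.factorial_ne_zero]

lemma iteratedDeriv_polynomial_eval (p : Polynomial 𝕜) (n : ℕ) :
    iteratedDeriv n (fun z => p.eval z) = fun z => (Polynomial.derivative^[n] p).eval z := by
  induction n with
  | zero => simp
  | succ n ih =>
    ext z
    rw [iteratedDeriv_succ, ih, Polynomial.deriv, Function.iterate_succ_apply']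

lemma taylorCoeff_polynomial_eval [CharZero 𝕜] (p : Polynomial 𝕜) (n : ℕ) :
    taylorCoeff (fun z => p.eval z) n = p.coeff n := by
  rw [taylorCoeff, iteratedDeriv_polynomial_eval]
  simp [← Polynomial.coeff_zero_eq_eval_zero, Polynomial.coeff_iterate_derivative,
    Nat.descFactorial_self, Nat.factorial_ne_zero]

end TaylorCoeff

lemma taylorCoeff_eq_circleAverage {u : ℂ → ℂ} (hu : DiffContOnCl ℂ u (Metric.ball 0 1)) (n : ℕ) :
    taylorCoeff u n = circleAverage (fun z => z ^ (-n : ℤ) • u z) 0 1 := by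
  have cauchy := hu.circleIntegral_one_div_sub_center_pow_smul one_pos n
  have integrand_eq (z : ℂ) :
      (z - 0)⁻¹ • z ^ (-n : ℤ) • u z = (1 / (z - 0) ^ (n + 1)) • u z := by
    simp only [sub_zero, zpow_neg, zpow_natCast, smul_eq_mul, pow_succ, mul_inv, one_div]
    ring
  rw [circleAverage_eq_circleIntegral one_ne_zero]
  simp only [integrand_eq]
  rw [cauchy, taylorCoeff, smul_eq_mul, smul_eq_mul, div_mul_eq_mul_div, mul_div_assoc,
    inv_mul_cancel_left₀ Complex.two_pi_I_ne_zero]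

lemma fourierCoeffOn_comp_circleMap {E : Type*} [NormedAddCommGroup E] [NormedSpace ℂ E]
    (f : ℂ → E) (n : ℤ) :
    fourierCoeffOn two_pi_pos (fun θ => f (circleMap 0 1 θ)) n =
      circleAverage (fun z => z ^ (-n) • f z) 0 1 := by
  have fourier_eq (θ : ℝ) :
      fourier (-n) (θ : AddCircle (2 * π - 0)) = circleMap 0 1 θ ^ (-n) := by
    rw [fourier_coe_apply, circleMap, zero_add, Complex.ofReal_one, one_mul, ← Complex.exp_int_mul]
    congr 1
    push_cast
    field_simp [pi_ne_zero]
    ring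
  rw [fourierCoeffOn_eq_integral, circleAverage_def]
  simp only [fourier_eq, sub_zero, one_div]

lemma sum_sq_norm_taylorCoeff_le {u : ℂ → ℂ} (hu : DiffContOnCl ℂ u (Metric.ball 0 1))
    (s : Finset ℕ) :
    ∑ n ∈ s, ‖taylorCoeff u n‖ ^ 2 ≤ circleAverage (fun z => ‖u z‖ ^ 2) 0 1 := by
  have boundary_continuous : Continuous fun θ : ℝ => u (circleMap 0 1 θ) :=
    hu.continuousOn_ball.comp_continuous (by fun_prop) fun θ =>
      Metric.sphere_subset_closedBall (circleMap_mem_sphere 0 zero_le_one θ)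
  have boundary_memLp : MemLp (fun θ => u (circleMap 0 1 θ)) 2
      (volume.restrict (Set.Ioc 0 (2 * π))) :=
    (memLp_two_iff_integrable_sq_norm boundary_continuous.aestronglyMeasurable).mpr
      (boundary_continuous.norm.pow 2).integrableOn_Ioc
  have parseval := hasSum_sq_fourierCoeffOn two_pi_pos boundary_memLp
  have bessel := sum_le_hasSum (s.map Nat.castEmbedding) (fun _ _ => by positivity) parseval
  simp only [sum_map, Nat.castEmbedding_apply, fourierCoeffOn_comp_circleMap,
    ← taylorCoeff_eq_circleAverage hu, sub_zero] at bessel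
  exact bessel

lemma complex_sqrt_sq (z : ℂ) : Complex.sqrt z ^ 2 = z := by
  simp [Complex.sqrt]

lemma diffContOnCl_sqrt : DiffContOnCl ℂ Complex.sqrt {z | 0 < z.re} where
  differentiableOn := Complex.differentiableOn_sqrt.mono fun _ hz => Or.inl hz
  continuousOn := by
    rw [Complex.closure_setOfPred_lt_re]
    exact fun _ hz => (Complex.continuousAt_sqrt (Or.inl hz)).continuousWithinAt

lemma diffContOnCl_sqrt_one_sub_mul {b : ℂ} (hb : ‖b‖ ≤ 1) :
    DiffContOnCl ℂ (fun z => Complex.sqrt (1 - b * z)) (Metric.ball 0 1) := by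
  have affine : Differentiable ℂ fun z => 1 - b * z := by fun_prop
  refine diffContOnCl_sqrt.comp affine.diffContOnCl fun z hz => ?_
  have : (b * z).re < 1 := calc
    (b * z).re ≤ ‖b‖ * ‖z‖ := (Complex.re_le_norm _).trans (norm_mul_le _ _)
    _ < 1 := mul_lt_one_of_nonneg_of_lt_one_right hb (norm_nonneg z) (mem_ball_zero_iff.mp hz)
  simpa using this

open ComplexConjugate in
lemma norm_one_sub_conj_mul (a : ℂ) {z : ℂ} (hz : ‖z‖ = 1) : ‖1 - conj a * z‖ = ‖z - a‖ := by
  have : 1 - conj a * z = conj (z - a) * z := by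
    rw [map_sub, sub_mul, Complex.conj_mul', hz]
    norm_num
  rw [this, norm_mul, Complex.norm_conj, hz, mul_one]

/-- `f` is, on the closed unit disc, a product of two functions of the disc algebra having equal
modulus (hence modulus `|f|^{1/2}`) on the unit circle. -/
def HasHardyFactorization (f : ℂ → ℂ) : Prop :=
  ∃ u v : ℂ → ℂ, DiffContOnCl ℂ u (Metric.ball 0 1) ∧ DiffContOnCl ℂ v (Metric.ball 0 1) ∧
    Set.EqOn f (u * v) (Metric.closedBall 0 1) ∧ ∀ z ∈ Metric.sphere (0 : ℂ) 1, ‖u z‖ = ‖v z‖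

namespace HasHardyFactorization

variable {f g u v : ℂ → ℂ}

lemma mul (hf : HasHardyFactorization f) (hg : HasHardyFactorization g) :
    HasHardyFactorization (f * g) := by
  obtain ⟨u, v, hu, hv, hf_eq, hf_norm⟩ := hf
  obtain ⟨u', v', hu', hv', hg_eq, hg_norm⟩ := hg
  refine ⟨u * u', v * v', hu.smul hu', hv.smul hv', fun z hz => ?_, fun z hz => ?_⟩
  · simp only [Pi.mul_apply, hf_eq hz, hg_eq hz]
    ring
  · simp only [Pi.mul_apply, norm_mul, hf_norm z hz, hg_norm z hz]

lemma of_eqOn_sq (hu : DiffContOnCl ℂ u (Metric.ball 0 1))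
    (hf : Set.EqOn f (u ^ 2) (Metric.closedBall 0 1)) : HasHardyFactorization f :=
  ⟨u, u, hu, hu, sq u ▸ hf, fun _ _ => rfl⟩

lemma sum_sq_norm_taylorCoeff_div_le (hf : HasHardyFactorization f) (M : ℕ) :
    ∑ n ∈ range M, ‖taylorCoeff f n‖ ^ 2 / ((n : ℝ) + 1) ≤
      circleAverage (fun z => ‖f z‖) 0 1 ^ 2 := by
  obtain ⟨u, v, hu, hv, f_eq, norm_eq⟩ := hf
  have contDiffAt_zero {h : ℂ → ℂ} (hh : DiffContOnCl ℂ h (Metric.ball 0 1)) (n : ℕ) :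
      ContDiffAt ℂ n h 0 :=
    (hh.differentiableOn.analyticAt (Metric.ball_mem_nhds 0 one_pos)).contDiffAt
  have coeff_eq (n : ℕ) :
      taylorCoeff f n = ∑ p ∈ antidiagonal n, taylorCoeff u p.1 * taylorCoeff v p.2 := by
    rw [← taylorCoeff_mul (contDiffAt_zero hu n) (contDiffAt_zero hv n), taylorCoeff, taylorCoeff,
      (f_eq.eventuallyEq_of_mem (Metric.closedBall_mem_nhds 0 one_pos)).iteratedDeriv_eq]
  have average_eq {h : ℂ → ℂ} (hh : ∀ z ∈ Metric.sphere (0 : ℂ) 1, ‖h z‖ ^ 2 = ‖f z‖) :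
      circleAverage (fun z => ‖h z‖ ^ 2) 0 1 = circleAverage (fun z => ‖f z‖) 0 1 :=
    circleAverage_congr_sphere fun z hz => hh z (by rwa [abs_one] at hz)
  have norm_f {z : ℂ} (hz : z ∈ Metric.sphere (0 : ℂ) 1) : ‖f z‖ = ‖u z‖ * ‖v z‖ := by
    rw [f_eq (Metric.sphere_subset_closedBall hz), Pi.mul_apply, norm_mul]
  have bessel_u := sum_sq_norm_taylorCoeff_le hu (range M)
  have bessel_v := sum_sq_norm_taylorCoeff_le hv (range M)
  rw [average_eq fun z hz => by rw [norm_f hz, ← norm_eq z hz, sq]] at bessel_u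
  rw [average_eq fun z hz => by rw [norm_f hz, norm_eq z hz, sq]] at bessel_v
  calc ∑ n ∈ range M, ‖taylorCoeff f n‖ ^ 2 / ((n : ℝ) + 1)
      ≤ ∑ n ∈ range M, ∑ p ∈ antidiagonal n, ‖taylorCoeff u p.1‖ ^ 2 * ‖taylorCoeff v p.2‖ ^ 2 := by
        gcongr with n
        rw [coeff_eq]
        exact sq_norm_sum_antidiagonal_div_le _ _ n
    _ ≤ ∑ p ∈ range M ×ˢ range M, ‖taylorCoeff u p.1‖ ^ 2 * ‖taylorCoeff v p.2‖ ^ 2 :=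
        sum_antidiagonal_range_le (fun _ => by positivity) M
    _ = (∑ n ∈ range M, ‖taylorCoeff u n‖ ^ 2) * ∑ n ∈ range M, ‖taylorCoeff v n‖ ^ 2 :=
        by rw [sum_mul_sum, sum_product]
    _ ≤ circleAverage (fun z => ‖f z‖) 0 1 ^ 2 := by
        rw [sq]
        gcongr
        exact (sum_nonneg fun _ _ => by positivity).trans bessel_u

lemma const (c : ℂ) : HasHardyFactorization fun _ => c :=
  of_eqOn_sq (u := fun _ => Complex.sqrt c) diffContOnCl_const fun _ _ => (complex_sqrt_sq c).symm

open ComplexConjugate in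
lemma sub_const_of_norm_lt_one {a : ℂ} (ha : ‖a‖ < 1) : HasHardyFactorization fun z => z - a := by
  let s : ℂ → ℂ := fun z => Complex.sqrt (1 - conj a * z)
  have hs : DiffContOnCl ℂ s (Metric.ball 0 1) :=
    diffContOnCl_sqrt_one_sub_mul ((Complex.norm_conj a).trans_le ha.le)
  have s_sq (z : ℂ) : s z ^ 2 = 1 - conj a * z := complex_sqrt_sq _
  have s_ne_zero {z : ℂ} (hz : z ∈ Metric.closedBall (0 : ℂ) 1) : s z ≠ 0 := fun h => by
    have norm_lt : ‖conj a * z‖ < 1 := by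
      rw [norm_mul, Complex.norm_conj]
      exact mul_lt_one_of_nonneg_of_lt_one_left (norm_nonneg a) ha (mem_closedBall_zero_iff.mp hz)
    have eq_one : conj a * z = 1 := by linear_combination s_sq z - s z * h
    simp [eq_one] at norm_lt
  refine ⟨fun z => (s z)⁻¹ * (z - a), s, ?_, hs, fun z hz => ?_, fun z hz => ?_⟩
  · refine (hs.inv fun z hz => s_ne_zero ?_).smul (differentiable_id.sub_const a).diffContOnCl
    rwa [closure_ball _ one_ne_zero] at hz
  · simp only [Pi.mul_apply]
    field_simp [s_ne_zero hz]
  · rw [norm_mul, norm_inv, ← norm_one_sub_conj_mul a (mem_sphere_zero_iff_norm.mp hz), ← s_sq,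
      norm_pow]
    field_simp [norm_ne_zero_iff.mpr (s_ne_zero (Metric.sphere_subset_closedBall hz))]

lemma sub_const_of_one_le_norm {a : ℂ} (ha : 1 ≤ ‖a‖) : HasHardyFactorization fun z => z - a := by
  have a_ne_zero : a ≠ 0 := norm_pos_iff.mp (one_pos.trans_le ha)
  have sqrt_factor := diffContOnCl_sqrt_one_sub_mul
    ((norm_inv a).trans_le (inv_le_one_of_one_le₀ ha))
  convert (const (-a)).mul (of_eqOn_sq sqrt_factor fun z _ => (complex_sqrt_sq (1 - a⁻¹ * z)).symm)
    using 1
  ext z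
  simp only [Pi.mul_apply]
  field_simp
  ring

lemma sub_const (a : ℂ) : HasHardyFactorization fun z => z - a :=
  (lt_or_ge ‖a‖ 1).elim sub_const_of_norm_lt_one sub_const_of_one_le_norm

lemma multiset_prod_sub (m : Multiset ℂ) :
    HasHardyFactorization fun z => (m.map fun a => z - a).prod := by
  induction m using Multiset.induction with
  | empty => simpa only [Multiset.map_zero, Multiset.prod_zero] using const 1
  | cons a m ih =>
    simp only [Multiset.map_cons, Multiset.prod_cons]
    exact (sub_const a).mul ih

lemma polynomial_eval (p : Polynomial ℂ) : HasHardyFactorization fun z => p.eval z := by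
  simp only [(IsAlgClosed.splits p).eval_eq_prod_roots]
  exact (const p.leadingCoeff).mul (multiset_prod_sub p.roots)

end HasHardyFactorization

lemma sum_sq_norm_coeff_div_le_sq_circleAverage (p : Polynomial ℂ) (M : ℕ) :
    ∑ n ∈ range M, ‖p.coeff n‖ ^ 2 / ((n : ℝ) + 1) ≤
      circleAverage (fun z => ‖p.eval z‖) 0 1 ^ 2 := by
  simpa only [taylorCoeff_polynomial_eval] using
    (HasHardyFactorization.polynomial_eval p).sum_sq_norm_taylorCoeff_div_le M

section WeightedMinkowski

variable {X ι : Type*} [MeasurableSpace X] [Fintype ι] {μ : Measure X} {w : ι → ℝ} {g : ι → X → ℝ}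

lemma norm_toLp_sqrt_mul (hw : ∀ i, 0 ≤ w i) (y : ι → ℝ) :
    ‖WithLp.toLp 2 fun i => √(w i) * y i‖ = √(∑ i, w i * y i ^ 2) := by
  simp only [EuclideanSpace.norm_eq, Real.norm_eq_abs, sq_abs, mul_pow, Real.sq_sqrt (hw _)]

lemma integrable_toLp_sqrt_mul (hg : ∀ i, Integrable (g i) μ) :
    Integrable (fun x => WithLp.toLp 2 fun i => √(w i) * g i x) μ :=
  (PiLp.continuousLinearEquiv 2 ℝ fun _ : ι => ℝ).symm.toContinuousLinearMap.integrable_comp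
    (Integrable.of_eval fun i => (hg i).const_mul _)

lemma integrable_sqrt_sum_mul_sq (hw : ∀ i, 0 ≤ w i) (hg : ∀ i, Integrable (g i) μ) :
    Integrable (fun x => √(∑ i, w i * g i x ^ 2)) μ := by
  simpa only [norm_toLp_sqrt_mul hw] using (integrable_toLp_sqrt_mul (w := w) hg).norm

lemma sqrt_sum_mul_sq_integral_le (hw : ∀ i, 0 ≤ w i) (hg : ∀ i, Integrable (g i) μ) :
    √(∑ i, w i * (∫ x, g i x ∂μ) ^ 2) ≤ ∫ x, √(∑ i, w i * g i x ^ 2) ∂μ := by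
  have hG := integrable_toLp_sqrt_mul (w := w) hg
  have integral_eq : ∫ x, WithLp.toLp 2 (fun i => √(w i) * g i x) ∂μ =
      WithLp.toLp 2 fun i => √(w i) * ∫ x, g i x ∂μ := by
    ext i
    exact ((EuclideanSpace.proj (𝕜 := ℝ) i).integral_comp_comm hG).symm.trans
      (integral_const_mul _ _)
  simpa only [integral_eq, norm_toLp_sqrt_mul hw] using
    norm_integral_le_integral_norm (μ := μ) fun x => WithLp.toLp 2 fun i => √(w i) * g i x

end WeightedMinkowski

/-- The coefficients of every linear combination of the `φ i` are controlled, in the `ℓ²`-norm with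
weights `w`, by the `L¹(μ)`-norm of that combination. -/
structure IsCoeffBound {X ι 𝕜 : Type*} [MeasurableSpace X] [Fintype ι] [NormedCommRing 𝕜]
    (μ : Measure X) (φ : ι → X → 𝕜) (w : ι → ℝ) : Prop where
  integrable : ∀ i, Integrable (φ i) μ
  nonneg : ∀ i, 0 ≤ w i
  le_integral : ∀ c : ι → 𝕜, √(∑ i, w i * ‖c i‖ ^ 2) ≤ ∫ x, ‖∑ i, c i * φ i x‖ ∂μ

namespace IsCoeffBound

variable {X Y ι κ 𝕜 : Type*} [MeasurableSpace X] [MeasurableSpace Y] [Fintype ι] [Fintype κ]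
  [NormedCommRing 𝕜] {μ : Measure X} {ν : Measure Y} {φ : ι → X → 𝕜} {ψ : κ → Y → 𝕜}
  {w : ι → ℝ} {v : κ → ℝ}

lemma congr_equiv (h : IsCoeffBound μ φ w) {e : Y ≃ᵐ X} (he : MeasurePreserving e ν μ)
    (σ : κ ≃ ι) : IsCoeffBound ν (fun k y => φ (σ k) (e y)) (w ∘ σ) where
  integrable k := he.integrable_comp_of_integrable (h.integrable (σ k))
  nonneg k := h.nonneg (σ k)
  le_integral c := by
    have bound := h.le_integral (c ∘ σ.symm)
    rw [← he.integral_comp' (g := fun x => ‖∑ i, (c ∘ σ.symm) i * φ i x‖)] at bound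
    simpa only [← σ.sum_comp, Function.comp_apply, σ.symm_apply_apply] using bound

lemma prod [SFinite μ] [SFinite ν] (hφ : IsCoeffBound μ φ w) (hψ : IsCoeffBound ν ψ v) :
    IsCoeffBound (μ.prod ν) (fun (p : ι × κ) z => φ p.1 z.1 * ψ p.2 z.2)
      (fun p => w p.1 * v p.2) where
  integrable p := (hφ.integrable p.1).mul_prod (hψ.integrable p.2)
  nonneg p := mul_nonneg (hφ.nonneg p.1) (hψ.nonneg p.2)
  le_integral c := by
    let C (k : κ) (x : X) : 𝕜 := ∑ i, c (i, k) * φ i x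
    have C_integrable (k : κ) : Integrable (fun x => ‖C k x‖) μ :=
      (integrable_finsetSum _ fun i _ => (hφ.integrable i).const_mul _).norm
    have sum_eq (z : X × Y) :
        ∑ p, c p * (φ p.1 z.1 * ψ p.2 z.2) = ∑ k, C k z.1 * ψ k z.2 := by
      simp only [C, Fintype.sum_prod_type_right, sum_mul, mul_assoc]
    have sum_integrable : Integrable (fun z : X × Y => ‖∑ k, C k z.1 * ψ k z.2‖) (μ.prod ν) := by
      simp only [← sum_eq]
      exact (integrable_finsetSum _ fun p _ =>
        ((hφ.integrable p.1).mul_prod (hψ.integrable p.2)).const_mul _).norm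
    calc √(∑ p, w p.1 * v p.2 * ‖c p‖ ^ 2)
        = √(∑ k, v k * ∑ i, w i * ‖c (i, k)‖ ^ 2) := by
          simp only [Fintype.sum_prod_type_right, mul_sum, mul_left_comm, mul_assoc]
      _ ≤ √(∑ k, v k * (∫ x, ‖C k x‖ ∂μ) ^ 2) := by
          gcongr with k
          · exact hψ.nonneg k
          · exact (Real.sqrt_le_left (integral_nonneg fun x => norm_nonneg _)).mp
              (hφ.le_integral fun i => c (i, k))
      _ ≤ ∫ x, √(∑ k, v k * ‖C k x‖ ^ 2) ∂μ := sqrt_sum_mul_sq_integral_le hψ.nonneg C_integrable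
      _ ≤ ∫ x, ∫ y, ‖∑ k, C k x * ψ k y‖ ∂ν ∂μ :=
          integral_mono (integrable_sqrt_sum_mul_sq hψ.nonneg C_integrable)
            sum_integrable.integral_prod_left fun x => hψ.le_integral (C · x)
      _ = ∫ z, ‖∑ p, c p * (φ p.1 z.1 * ψ p.2 z.2)‖ ∂μ.prod ν := by
          simp only [sum_eq, integral_prod _ sum_integrable]

lemma pi {N : ℕ} {Z η : Fin N → Type*} [∀ j, MeasurableSpace (Z j)] [∀ j, Fintype (η j)]
    {ρ : ∀ j, Measure (Z j)} [∀ j, SigmaFinite (ρ j)] {χ : ∀ j, η j → Z j → 𝕜}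
    {u : ∀ j, η j → ℝ} (h : ∀ j, IsCoeffBound (ρ j) (χ j) (u j)) :
    IsCoeffBound (Measure.pi ρ) (fun (α : ∀ j, η j) z => ∏ j, χ j (α j) (z j))
      (fun α => ∏ j, u j (α j)) := by
  induction N with
  | zero =>
    have : IsProbabilityMeasure (Measure.pi ρ) := ⟨Measure.pi_empty_univ ρ⟩
    exact {
      integrable := fun _ => by simp
      nonneg := fun _ => by simp
      le_integral := fun c => by simp }
  | succ N ih =>
    have tensor := ((h 0).prod (ih fun j => h j.succ)).congr_equiv
      (measurePreserving_piFinSuccAbove ρ 0) (Fin.insertNthEquiv η 0).symm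
    simp only [Fin.prod_univ_succ]
    exact tensor

end IsCoeffBound

lemma circleAverage_zero_one_eq_setIntegral {E : Type*} [NormedAddCommGroup E] [NormedSpace ℝ E]
    (f : ℂ → E) :
    circleAverage f 0 1 =
      (2 * π)⁻¹ • ∫ θ : ℝ in Set.Icc 0 (2 * π), f (Complex.exp (Complex.I * θ)) := by
  rw [circleAverage_def, intervalIntegral.integral_of_le two_pi_pos.le,
    ← integral_Icc_eq_integral_Ioc]
  simp only [circleMap, zero_add, Complex.ofReal_one, one_mul, mul_comm Complex.I]

-- The factor `(2π)²` is there because the measure on `[0, 2π]` is not normalized.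
lemma isCoeffBound_exp_pow (M : ℕ) :
    IsCoeffBound (volume.restrict (Set.Icc 0 (2 * π)))
      (fun (n : Fin M) (θ : ℝ) => Complex.exp (Complex.I * θ) ^ (n : ℕ))
      (fun n => (2 * π) ^ 2 / ((n : ℝ) + 1)) where
  integrable n := Continuous.integrableOn_Icc (by fun_prop)
  nonneg n := by positivity
  le_integral c := by
    classical
    have carleman := sum_sq_norm_coeff_div_le_sq_circleAverage (Polynomial.ofFn M c) M
    have eval_eq (z : ℂ) : (Polynomial.ofFn M c).eval z = ∑ n, c n * z ^ (n : ℕ) := by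
      simp only [Polynomial.ofFn_eq_sum_monomial, Polynomial.eval_finsetSum,
        Polynomial.eval_monomial]
    simp only [sum_range, Polynomial.ofFn_coeff_eq_val_of_lt _ (Fin.is_lt _), Fin.eta, eval_eq,
      circleAverage_zero_one_eq_setIntegral, smul_eq_mul] at carleman
    rw [mul_pow, inv_pow, ← div_eq_inv_mul, le_div_iff₀' (by positivity), mul_sum] at carleman
    refine Real.sqrt_le_iff.mpr ⟨integral_nonneg fun _ => norm_nonneg _, ?_⟩
    simpa only [mul_div_assoc', div_mul_eq_mul_div] using carleman

lemma sum_eq_sum_fin_of_support_subset {ι E : Type*} [Fintype ι] [DecidableEq ι]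
    [AddCommMonoid E] {S : Finset (ι → ℕ)} {M : ℕ} (hM : ∀ α ∈ S, ∀ j, α j < M) {f : (ι → ℕ) → E}
    (hf : ∀ α ∉ S, f α = 0) :
    ∑ α ∈ S, f α = ∑ α : ι → Fin M, f fun j => α j := by
  classical
  have val_injective : Function.Injective fun (α : ι → Fin M) j => (α j : ℕ) :=
    Fin.val_injective.comp_left
  rw [← sum_image (f := f) val_injective.injOn]
  refine sum_subset (fun α hα => ?_) fun α _ hα => hf α hα
  exact mem_image.mpr ⟨fun j => ⟨α j, hM α hα j⟩, mem_univ _, rfl⟩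

lemma exists_forall_multiIndex_lt {ι : Type*} [Finite ι] (S : Finset (ι → ℕ)) :
    ∃ M, ∀ α ∈ S, ∀ j, α j < M := by
  obtain ⟨b, hb⟩ := S.bddAbove
  obtain ⟨m, hm⟩ := (Set.finite_range b).bddAbove
  exact ⟨m + 1, fun α hα j => Nat.lt_succ_of_le ((hb hα j).trans (hm ⟨j, rfl⟩))⟩

lemma two_pi_pow_mul_sqrt_le_integral {N M : ℕ} (c : (Fin N → Fin M) → ℂ) :
    (2 * π) ^ N * √(∑ α, ‖c α‖ ^ 2 / ∏ j, ((α j : ℝ) + 1)) ≤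
      ∫ θ : Fin N → ℝ in Set.univ.pi fun _ => Set.Icc 0 (2 * π),
        ‖∑ α, c α * ∏ j, Complex.exp (Complex.I * θ j) ^ (α j : ℕ)‖ := by
  rw [volume_pi, Measure.restrict_pi_pi]
  calc (2 * π) ^ N * √(∑ α, ‖c α‖ ^ 2 / ∏ j, ((α j : ℝ) + 1))
      = √(∑ α, (∏ j, (2 * π) ^ 2 / ((α j : ℝ) + 1)) * ‖c α‖ ^ 2) := by
        rw [← Real.sqrt_sq (by positivity : 0 ≤ (2 * π) ^ N), ← Real.sqrt_mul (by positivity),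
          mul_sum]
        simp only [prod_div_distrib, prod_const, card_univ, Fintype.card_fin, ← pow_mul,
          mul_comm 2, div_mul_eq_mul_div, mul_div_assoc']
    _ ≤ _ := (IsCoeffBound.pi fun _ => isCoeffBound_exp_pow M).le_integral c

/-- **Helson's inequality.** For a polynomial `f(w) = ∑_α c_α w^α` in `N` complex
variables (coefficients supported on a finite set `S`),
`(∑_α |c_α|² / ∏_j (α_j+1))^{1/2} ≤ ∫_{𝕋^N} |f(w)| dσ(w)`,
the torus `𝕋^N` being parametrized by `w_j = e^{iθ_j}`, `θ ∈ [0,2π]^N`, with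
normalized Haar measure `dσ = dθ/(2π)^N`. -/
theorem helson_inequality (N : ℕ) (hN : 1 ≤ N) (S : Finset (Fin N → ℕ))
    (c : (Fin N → ℕ) → ℂ) (hc : ∀ α, c α ≠ 0 → α ∈ S) :
    Real.sqrt (∑ α ∈ S, ‖c α‖ ^ 2 / ∏ j, ((α j : ℝ) + 1))
      ≤ (1 / (2 * π) ^ N) *
        ∫ θ : Fin N → ℝ in Set.univ.pi fun _ => Set.Icc 0 (2 * π),
          ‖∑ α ∈ S, c α * ∏ j, Complex.exp (Complex.I * θ j) ^ α j‖ := by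
  obtain ⟨M, hM⟩ := exists_forall_multiIndex_lt S
  have c_eq_zero {α : Fin N → ℕ} (hα : α ∉ S) : c α = 0 := not_not.mp (mt (hc α) hα)
  have coeff_sum_eq := sum_eq_sum_fin_of_support_subset hM
    (f := fun α => ‖c α‖ ^ 2 / ∏ j, ((α j : ℝ) + 1)) fun α hα => by simp [c_eq_zero hα]
  have polynomial_eq (θ : Fin N → ℝ) := sum_eq_sum_fin_of_support_subset hM
    (f := fun α => c α * ∏ j, Complex.exp (Complex.I * θ j) ^ α j)
    fun α hα => by simp [c_eq_zero hα]
  rw [one_div_mul_eq_div, le_div_iff₀' (by positivity), coeff_sum_eq]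
  simp only [polynomial_eq]
  exact two_pi_pow_mul_sqrt_le_integral fun α => c fun j => α j
end

section
/- For every complex polynomial f one has ∫_𝔻 |f(z)|² dm(z) ≤ (∫_𝕋 |f(w)| dσ(w))², where dm is the normalized Lebesgue (area) measure on the open unit disc 𝔻 (total mass 1) and dσ is the normalized arc-length measure on the unit circle 𝕋. That is, the Bergman B₂(𝔻) norm of f is at most its Hardy H¹(𝕋) norm. -/
open MeasureTheory Real

/-!
Replacing the factor `z - r` of `f` by `1 - conj r * z` for each zero `r` inside the disc leaves
`|f|` unchanged on the circle and does not decrease it inside. The new function has no zeros in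
the open disc, so it is `h²` with `h` holomorphic in the disc and continuous up to the circle,
and it suffices to bound the area mean of `|h²|²` by the square of the mean of `|h|²` over the
circle. By Parseval's formula these means are `∑ |cₙ|² / (n + 1)` and `∑ |aₖ|²`, where `cₙ` and
`aₖ` are the Taylor coefficients of `h²` and `h`. Since `cₙ` is a sum of `n + 1` products `aᵢ aⱼ`
with `i + j = n`, the Cauchy–Schwarz inequality gives the bound. The coefficients are only
manipulated for polynomials, which are uniformly dense among the functions `h` in question.
-/

open Metric Set Filter Topology Polynomial
open scoped ComplexConjugate

lemma circleMap_eq_polarCoord_symm_add (c : ℂ) (q : ℝ × ℝ) :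
    circleMap c q.1 q.2 = Complex.polarCoord.symm q + c := by
  rw [circleMap, Complex.exp_mul_I, Complex.polarCoord_symm_apply, add_comm, Complex.ofReal_cos,
    Complex.ofReal_sin]

lemma polarCoord_target_inter_abs_fst_lt (R : ℝ) :
    polarCoord.target ∩ {q | |q.1| < R} = Ioo 0 R ×ˢ Ioo (-π) π := by
  ext q
  simp only [polarCoord_target, mem_inter_iff, mem_prod, mem_Ioi, mem_ofPred_eq, mem_Ioo]
  grind

section Polar

variable {E : Type*} [NormedAddCommGroup E] [NormedSpace ℝ E]

lemma setIntegral_ball_eq_setIntegral_circleMap (f : ℂ → E) (c : ℂ) (R : ℝ) :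
    ∫ z in ball c R, f z = ∫ q in Ioo 0 R ×ˢ Ioo (-π) π, q.1 • f (circleMap c q.1 q.2) := by
  have h_translate : ∫ z in ball c R, f z = ∫ z, (ball 0 R).indicator (fun z ↦ f (z + c)) z := by
    rw [← integral_indicator measurableSet_ball, ← integral_add_right_eq_self _ c]
    exact integral_congr_ae (.of_forall fun z ↦ by simp [Set.indicator])
  have h_indicator (q : ℝ × ℝ) :
      q.1 • (ball 0 R).indicator (fun z ↦ f (z + c)) (Complex.polarCoord.symm q) =
        {q : ℝ × ℝ | |q.1| < R}.indicator (fun q ↦ q.1 • f (circleMap c q.1 q.2)) q := by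
    by_cases hq : |q.1| < R <;> simp [Set.indicator, circleMap_eq_polarCoord_symm_add, hq]
  rw [h_translate, ← Complex.integral_comp_polarCoord_symm]
  simp_rw [h_indicator]
  rw [setIntegral_indicator (measurableSet_lt (by fun_prop) measurable_const),
    polarCoord_target_inter_abs_fst_lt]

lemma intervalIntegral_circleMap_neg_pi_pi (f : ℂ → E) (c : ℂ) (r : ℝ) :
    ∫ θ in -π..π, f (circleMap c r θ) = (2 * π) • circleAverage f c r := by
  have h_periodic : Function.Periodic (fun θ ↦ f (circleMap c r θ)) (2 * π) :=
    (periodic_circleMap c r).comp f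
  rw [circleAverage_def, smul_inv_smul₀ two_pi_pos.ne', ← zero_add (2 * π),
    ← h_periodic.intervalIntegral_add_eq (-π) 0]
  congr 1
  ring

theorem setIntegral_ball_eq_intervalIntegral_circleAverage {f : ℂ → E} {c : ℂ} {R : ℝ}
    (hR : 0 ≤ R) (hf : ContinuousOn f (closedBall c R)) :
    ∫ z in ball c R, f z = ∫ r in 0..R, (2 * π * r) • circleAverage f c r := by
  have h_cont : ContinuousOn (fun q : ℝ × ℝ ↦ q.1 • f (circleMap c q.1 q.2))
      (Icc 0 R ×ˢ Icc (-π) π) := by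
    refine continuousOn_fst.smul (hf.comp (by unfold circleMap; fun_prop) fun q hq ↦ ?_)
    exact closedBall_subset_closedBall hq.1.2 (circleMap_mem_closedBall c hq.1.1 q.2)
  have h_int : IntegrableOn (fun q : ℝ × ℝ ↦ q.1 • f (circleMap c q.1 q.2))
      (Ioo 0 R ×ˢ Ioo (-π) π) (volume.prod volume) :=
    (h_cont.integrableOn_compact (isCompact_Icc.prod isCompact_Icc)).mono_set
      (prod_mono Ioo_subset_Icc_self Ioo_subset_Icc_self)
  rw [setIntegral_ball_eq_setIntegral_circleMap, Measure.volume_eq_prod,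
    setIntegral_prod _ h_int, intervalIntegral.integral_of_le hR, integral_Ioc_eq_integral_Ioo]
  refine setIntegral_congr_fun measurableSet_Ioo fun r _ ↦ ?_
  simp only
  rw [integral_smul, ← integral_Ioc_eq_integral_Ioo,
    ← intervalIntegral.integral_of_le (by linarith [pi_pos]),
    intervalIntegral_circleMap_neg_pi_pi, smul_smul, mul_comm r]

end Polar

lemma circleAverage_norm_sq_eval (p : ℂ[X]) (r : ℝ) :
    circleAverage (fun z ↦ ‖p.eval z‖ ^ 2) 0 r =
      ∑ i ∈ p.support, ‖p.coeff i‖ ^ 2 * r ^ (2 * i) := by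
  have h_dilate : circleAverage (fun z ↦ ‖p.eval z‖ ^ 2) 0 r =
      circleAverage (fun z ↦ ‖(p.comp (C (r : ℂ) * X)).eval z‖ ^ 2) 0 1 := by
    rw [circleAverage_eq_circleAverage_zero_one]
    simp
  have h_coeff (i : ℕ) :
      ‖(p.comp (C (r : ℂ) * X)).coeff i‖ ^ 2 = ‖p.coeff i‖ ^ 2 * r ^ (2 * i) := by
    rw [comp_C_mul_X_coeff, norm_mul, norm_pow, Complex.norm_real, mul_pow, ← pow_mul, mul_comm i,
      pow_mul, norm_eq_abs, sq_abs, pow_mul]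
  rw [h_dilate, ← sum_sq_norm_coeff_eq_circleAverage]
  simp_rw [h_coeff]
  refine Finset.sum_subset (fun i hi ↦ ?_) fun i _ hi ↦ ?_
  · rw [mem_support_iff, comp_C_mul_X_coeff] at hi
    exact mem_support_iff.2 (left_ne_zero_of_mul hi)
  · rw [← h_coeff, notMem_support_iff.1 hi]
    simp

lemma volume_real_ball_complex (c : ℂ) {R : ℝ} (hR : 0 ≤ R) :
    volume.real (ball c R) = π * R ^ 2 := by
  rw [measureReal_def, Complex.volume_ball]
  simp [hR, mul_comm]

theorem setAverage_ball_norm_sq_eval (p : ℂ[X]) {R : ℝ} (hR : 0 < R) :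
    ⨍ z in ball (0 : ℂ) R, ‖p.eval z‖ ^ 2 =
      ∑ i ∈ p.support, ‖p.coeff i‖ ^ 2 * R ^ (2 * i) / (i + 1) := by
  rw [setAverage_eq, setIntegral_ball_eq_intervalIntegral_circleAverage hR.le (by fun_prop),
    volume_real_ball_complex 0 hR.le]
  simp_rw [circleAverage_norm_sq_eval, smul_eq_mul, Finset.mul_sum]
  rw [intervalIntegral.integral_finsetSum fun i _ ↦
    Continuous.intervalIntegrable (by fun_prop) 0 R, Finset.mul_sum]
  refine Finset.sum_congr rfl fun i _ ↦ ?_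
  have h_monomial (r : ℝ) : 2 * π * r * (‖p.coeff i‖ ^ 2 * r ^ (2 * i)) =
      2 * π * ‖p.coeff i‖ ^ 2 * r ^ (2 * i + 1) := by ring
  simp_rw [h_monomial]
  rw [intervalIntegral.integral_const_mul, integral_pow]
  have h_exponent : ((2 * i + 1 : ℕ) : ℝ) + 1 = 2 * (i + 1) := by
    push_cast
    ring
  rw [h_exponent]
  field_simp
  ring

section CoeffMul

open Finset.HasAntidiagonal (antidiagonal)

variable {A : Type*} [SeminormedRing A]

lemma norm_coeff_mul_sq_le (p q : A[X]) (n : ℕ) :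
    ‖(p * q).coeff n‖ ^ 2 ≤
      (n + 1) * ∑ x ∈ antidiagonal n, ‖p.coeff x.1‖ ^ 2 * ‖q.coeff x.2‖ ^ 2 := by
  calc ‖(p * q).coeff n‖ ^ 2
      ≤ (∑ x ∈ antidiagonal n, ‖p.coeff x.1‖ * ‖q.coeff x.2‖) ^ 2 := by
        rw [coeff_mul]
        gcongr
        exact norm_sum_le_of_le _ fun x _ ↦ norm_mul_le _ _
    _ ≤ (antidiagonal n).card *
          ∑ x ∈ antidiagonal n, (‖p.coeff x.1‖ * ‖q.coeff x.2‖) ^ 2 :=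
        sq_sum_le_card_mul_sum_sq
    _ = (n + 1) * ∑ x ∈ antidiagonal n, ‖p.coeff x.1‖ ^ 2 * ‖q.coeff x.2‖ ^ 2 := by
        simp [mul_pow]

lemma sum_antidiagonal_norm_sq_coeff (p q : A[X]) (n : ℕ) :
    ∑ x ∈ antidiagonal n, ‖p.coeff x.1‖ ^ 2 * ‖q.coeff x.2‖ ^ 2 =
      ∑ x ∈ p.support ×ˢ q.support with x.1 + x.2 = n, ‖p.coeff x.1‖ ^ 2 * ‖q.coeff x.2‖ ^ 2 := by
  symm
  refine Finset.sum_subset (fun x hx ↦ ?_) fun x hx hx' ↦ ?_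
  · exact Finset.HasAntidiagonal.mem_antidiagonal.2 (Finset.mem_filter.1 hx).2
  · simp only [Finset.mem_filter, Finset.mem_product, mem_support_iff,
      Finset.HasAntidiagonal.mem_antidiagonal.1 hx, and_true] at hx'
    grind [norm_zero]

theorem sum_norm_sq_coeff_mul_div_le (p q : A[X]) :
    ∑ n ∈ (p * q).support, ‖(p * q).coeff n‖ ^ 2 / (n + 1) ≤
      (∑ i ∈ p.support, ‖p.coeff i‖ ^ 2) * ∑ j ∈ q.support, ‖q.coeff j‖ ^ 2 := by
  calc ∑ n ∈ (p * q).support, ‖(p * q).coeff n‖ ^ 2 / (n + 1)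
      ≤ ∑ n ∈ (p * q).support, ∑ x ∈ p.support ×ˢ q.support with x.1 + x.2 = n,
          ‖p.coeff x.1‖ ^ 2 * ‖q.coeff x.2‖ ^ 2 := by
        refine Finset.sum_le_sum fun n _ ↦ ?_
        rw [div_le_iff₀' (by positivity), ← sum_antidiagonal_norm_sq_coeff]
        exact norm_coeff_mul_sq_le p q n
    _ ≤ ∑ x ∈ p.support ×ˢ q.support, ‖p.coeff x.1‖ ^ 2 * ‖q.coeff x.2‖ ^ 2 :=
        Finset.sum_fiberwise_le_sum_of_sum_fiber_nonneg fun n _ ↦ by positivity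
    _ = (∑ i ∈ p.support, ‖p.coeff i‖ ^ 2) * ∑ j ∈ q.support, ‖q.coeff j‖ ^ 2 := by
        rw [Finset.sum_mul_sum, Finset.sum_product]

end CoeffMul

lemma setAverage_norm_eval_mul_sq_le (p q : ℂ[X]) :
    ⨍ z in ball (0 : ℂ) 1, ‖(p * q).eval z‖ ^ 2 ≤
      circleAverage (fun z ↦ ‖p.eval z‖ ^ 2) 0 1 * circleAverage (fun z ↦ ‖q.eval z‖ ^ 2) 0 1 := by
  rw [setAverage_ball_norm_sq_eval _ one_pos]
  simpa only [circleAverage_norm_sq_eval, one_pow, mul_one] using sum_norm_sq_coeff_mul_div_le p q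

section Approximation

variable {h : ℂ → ℂ} {c : ℂ} {R ε : ℝ}

lemma exists_polynomial_eval_eq_partialSum {𝕜 : Type*} [NontriviallyNormedField 𝕜]
    (P : FormalMultilinearSeries 𝕜 𝕜 𝕜) (n : ℕ) (c : 𝕜) :
    ∃ p : 𝕜[X], ∀ z, p.eval z = P.partialSum n (z - c) := by
  refine ⟨∑ k ∈ Finset.range n, C (P.coeff k) * (X - C c) ^ k, fun z ↦ ?_⟩
  simp [eval_finsetSum, FormalMultilinearSeries.partialSum, mul_comm]

lemma exists_polynomial_norm_sub_eval_lt_of_differentiableOn_ball {r : ℝ}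
    (hh : DifferentiableOn ℂ h (ball c R)) (hr : 0 ≤ r) (hrR : r < R) (hε : 0 < ε) :
    ∃ p : ℂ[X], ∀ z ∈ closedBall c r, ‖h z - p.eval z‖ < ε := by
  obtain ⟨s, hrs, hsR⟩ := exists_between hrR
  obtain ⟨s', hss', hsR'⟩ := exists_between hsR
  lift s' to NNReal using by linarith
  lift s to NNReal using by linarith
  have h_series := DifferentiableOn.hasFPowerSeriesOnBall
    (hh.mono (closedBall_subset_ball hsR')) (NNReal.coe_pos.1 (by linarith))
  have h_unif := h_series.tendstoUniformlyOn' (r' := s) (by exact_mod_cast hss')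
  obtain ⟨n, hn⟩ := (Metric.tendstoUniformlyOn_iff.1 h_unif ε hε).exists
  obtain ⟨p, hp⟩ := exists_polynomial_eval_eq_partialSum (cauchyPowerSeries h c s') n c
  refine ⟨p, fun z hz ↦ ?_⟩
  rw [hp, ← dist_eq_norm]
  exact hn z (closedBall_subset_ball hrs hz)

lemma tendstoUniformlyOn_dilation (hh : ContinuousOn h (closedBall c R)) :
    TendstoUniformlyOn (fun (t : ℝ) z ↦ h (c + t * (z - c))) h (𝓝[<] 1) (closedBall c R) := by
  have h_maps : MapsTo (fun x : ℝ × ℂ ↦ c + x.1 * (x.2 - c)) (Icc 0 1 ×ˢ closedBall c R)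
      (closedBall c R) := by
    rintro ⟨t, z⟩ ⟨ht, hz⟩
    simpa [AffineMap.lineMap_apply, add_comm] using
      (convex_closedBall c R).lineMap_mem
        (mem_closedBall_self (nonempty_closedBall.1 ⟨z, hz⟩)) hz ht
  have h_unif : UniformContinuousOn (fun x : ℝ × ℂ ↦ h (c + x.1 * (x.2 - c)))
      (Icc 0 1 ×ˢ closedBall c R) :=
    (isCompact_Icc.prod (isCompact_closedBall c R)).uniformContinuousOn_of_continuous
      (hh.comp (by fun_prop) h_maps)
  have h_lim := UniformContinuousOn.tendstoUniformlyOn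
    (F := fun (t : ℝ) z ↦ h (c + t * (z - c))) h_unif (right_mem_Icc.2 zero_le_one)
  simp only [Complex.ofReal_one, one_mul, add_sub_cancel] at h_lim
  exact fun u hu ↦ nhdsWithin_le_of_mem (Icc_mem_nhdsLT zero_lt_one) (h_lim u hu)

theorem exists_polynomial_tendstoUniformlyOn_closedBall (hR : 0 < R)
    (hh : DiffContOnCl ℂ h (ball c R)) :
    ∃ p : ℕ → ℂ[X], TendstoUniformlyOn (fun n z ↦ (p n).eval z) h atTop (closedBall c R) := by
  suffices h_approx : ∀ ε > 0, ∃ p : ℂ[X], ∀ z ∈ closedBall c R, dist (h z) (p.eval z) < ε by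
    choose! p hp using h_approx
    obtain ⟨u, -, hu_pos, hu⟩ := exists_seq_strictAnti_tendsto (0 : ℝ)
    refine ⟨fun n ↦ p (u n), Metric.tendstoUniformlyOn_iff.2 fun ε hε ↦ ?_⟩
    filter_upwards [hu.eventually_lt_const hε] with n hn z hz
    exact (hp _ (hu_pos n) z hz).trans hn
  intro ε hε
  obtain ⟨t, h_dil, ht⟩ := (((Metric.tendstoUniformlyOn_iff.1
    (tendstoUniformlyOn_dilation (closure_ball c hR.ne' ▸ hh.continuousOn))) (ε / 2)
      (half_pos hε)).and (Ioo_mem_nhdsLT zero_lt_one)).exists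
  obtain ⟨p, hp⟩ := exists_polynomial_norm_sub_eval_lt_of_differentiableOn_ball hh.differentiableOn
    (mul_nonneg ht.1.le hR.le) (mul_lt_of_lt_one_left hR ht.2) (half_pos hε)
  refine ⟨p.comp (C c + C (t : ℂ) * (X - C c)), fun z hz ↦ ?_⟩
  have h_mem : c + t * (z - c) ∈ closedBall c (t * R) := by
    rw [mem_closedBall_iff_norm] at hz ⊢
    rw [add_sub_cancel_left, norm_mul, Complex.norm_real, norm_of_nonneg ht.1.le]
    exact mul_le_mul_of_nonneg_left hz ht.1.le
  have h_poly := hp _ h_mem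
  rw [← dist_eq_norm] at h_poly
  simpa using (dist_triangle _ _ _).trans_lt (add_lt_add (h_dil z hz) h_poly)

end Approximation

section UniformLimits

variable {ι E : Type*} {l : Filter ι} [NormedAddCommGroup E]

lemma tendstoUniformlyOn_mul_of_isCompact {X M : Type*} [TopologicalSpace X]
    [NonUnitalSeminormedRing M] {K : Set X} (hK : IsCompact K) {F G : ι → X → M} {f g : X → M}
    (hF : TendstoUniformlyOn F f l K) (hG : TendstoUniformlyOn G g l K) (hf : ContinuousOn f K)
    (hg : ContinuousOn g K) :
    TendstoUniformlyOn (fun n x ↦ F n x * G n x) (fun x ↦ f x * g x) l K := by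
  rw [← tendstoLocallyUniformlyOn_iff_tendstoUniformlyOn_of_compact hK] at hF hG ⊢
  exact hF.fun_mul₀ hG hf hg

lemma tendstoUniformlyOn_norm_sq_of_isCompact {X : Type*} [TopologicalSpace X] {K : Set X}
    (hK : IsCompact K) {F : ι → X → E} {f : X → E} (hF : TendstoUniformlyOn F f l K)
    (hf : ContinuousOn f K) :
    TendstoUniformlyOn (fun n x ↦ ‖F n x‖ ^ 2) (fun x ↦ ‖f x‖ ^ 2) l K := by
  have h_norm := uniformContinuous_norm.comp_tendstoUniformlyOn hF
  simpa only [sq, Function.comp_apply] using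
    tendstoUniformlyOn_mul_of_isCompact hK h_norm h_norm hf.norm hf.norm

variable [NormedSpace ℝ E]

lemma tendsto_setAverage_of_tendstoUniformlyOn {X : Type*} [MeasurableSpace X] {μ : Measure X}
    {s : Set X} (hμ : μ s ≠ ⊤) {F : ι → X → E} {f : X → E}
    (hF : ∀ᶠ n in l, IntegrableOn (F n) s μ) (hf : IntegrableOn f s μ)
    (h_lim : TendstoUniformlyOn F f l s) :
    Tendsto (fun n ↦ ⨍ x in s, F n x ∂μ) l (𝓝 (⨍ x in s, f x ∂μ)) := by
  simp only [setAverage_eq]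
  refine Tendsto.const_smul (Metric.tendsto_nhds.2 fun ε hε ↦ ?_) _
  have h_pos : 0 < μ.real s + 1 := by positivity
  filter_upwards [hF, Metric.tendstoUniformlyOn_iff.1 h_lim _ (div_pos hε h_pos)]
    with n hn h_near
  calc dist (∫ x in s, F n x ∂μ) (∫ x in s, f x ∂μ)
      = ‖∫ x in s, (f x - F n x) ∂μ‖ := by rw [integral_sub hf hn, dist_comm, dist_eq_norm]
    _ ≤ ε / (μ.real s + 1) * μ.real s :=
        norm_setIntegral_le_of_norm_le_const hμ.lt_top fun x hx ↦
          dist_eq_norm (f x) (F n x) ▸ (h_near x hx).le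
    _ < ε := by
        rw [div_mul_eq_mul_div, div_lt_iff₀ h_pos]
        gcongr
        exact lt_add_one _

lemma tendsto_circleAverage_of_tendstoUniformlyOn [l.IsCountablyGenerated] {F : ι → ℂ → E}
    {f : ℂ → E} {c : ℂ} {R : ℝ} (hF : ∀ᶠ n in l, ContinuousOn (F n) (sphere c |R|))
    (h_lim : TendstoUniformlyOn F f l (sphere c |R|)) :
    Tendsto (fun n ↦ circleAverage (F n) c R) l (𝓝 (circleAverage f c R)) := by
  have h_maps : MapsTo (circleMap c R) (uIcc 0 (2 * π)) (sphere c |R|) :=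
    fun θ _ ↦ circleMap_mem_sphere' c R θ
  exact (TendstoUniformlyOn.tendsto_intervalIntegral_of_continuousOn
    (hF.mono fun n hn ↦ hn.comp (continuous_circleMap c R).continuousOn h_maps)
    ((h_lim.comp (circleMap c R)).mono h_maps)).const_smul _

end UniformLimits

lemma integrableOn_ball_of_continuousOn_closedBall {E : Type*} [NormedAddCommGroup E] {f : ℂ → E}
    {c : ℂ} {R : ℝ} (hf : ContinuousOn f (closedBall c R)) : IntegrableOn f (ball c R) :=
  (hf.integrableOn_compact (isCompact_closedBall c R)).mono_set ball_subset_closedBall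

theorem setAverage_norm_mul_sq_le {h k : ℂ → ℂ} (hh : DiffContOnCl ℂ h (ball 0 1))
    (hk : DiffContOnCl ℂ k (ball 0 1)) :
    ⨍ z in ball (0 : ℂ) 1, ‖h z * k z‖ ^ 2 ≤
      circleAverage (fun z ↦ ‖h z‖ ^ 2) 0 1 * circleAverage (fun z ↦ ‖k z‖ ^ 2) 0 1 := by
  obtain ⟨p, hp⟩ := exists_polynomial_tendstoUniformlyOn_closedBall one_pos hh
  obtain ⟨q, hq⟩ := exists_polynomial_tendstoUniformlyOn_closedBall one_pos hk
  have h_compact := isCompact_closedBall (0 : ℂ) 1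
  have hh_cont := hh.continuousOn_ball
  have hk_cont := hk.continuousOn_ball
  have h_circle {p : ℕ → ℂ[X]} {h : ℂ → ℂ} (h_cont : ContinuousOn h (closedBall 0 1))
      (hp : TendstoUniformlyOn (fun n z ↦ (p n).eval z) h atTop (closedBall 0 1)) :
      Tendsto (fun n ↦ circleAverage (fun z ↦ ‖(p n).eval z‖ ^ 2) 0 1) atTop
        (𝓝 (circleAverage (fun z ↦ ‖h z‖ ^ 2) 0 1)) :=
    tendsto_circleAverage_of_tendstoUniformlyOn (.of_forall fun n ↦ by fun_prop)
      ((tendstoUniformlyOn_norm_sq_of_isCompact h_compact hp h_cont).mono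
        (by simpa using sphere_subset_closedBall))
  have h_disc : Tendsto (fun n ↦ ⨍ z in ball (0 : ℂ) 1, ‖(p n * q n).eval z‖ ^ 2) atTop
      (𝓝 (⨍ z in ball (0 : ℂ) 1, ‖h z * k z‖ ^ 2)) := by
    simp only [eval_mul]
    exact tendsto_setAverage_of_tendstoUniformlyOn measure_ball_lt_top.ne
      (.of_forall fun n ↦ integrableOn_ball_of_continuousOn_closedBall (by fun_prop))
      (integrableOn_ball_of_continuousOn_closedBall ((hh_cont.mul hk_cont).norm.pow 2))
      ((tendstoUniformlyOn_norm_sq_of_isCompact h_compact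
        (tendstoUniformlyOn_mul_of_isCompact h_compact hp hq hh_cont hk_cont)
        (hh_cont.mul hk_cont)).mono ball_subset_closedBall)
  exact le_of_tendsto_of_tendsto' h_disc ((h_circle hh_cont hp).mul (h_circle hk_cont hq))
    fun n ↦ setAverage_norm_eval_mul_sq_le (p n) (q n)

/-- `h²` is a majorant of `f` on the closed unit disc that has the modulus of `f` on the unit
circle, where `h` is continuous on the closed disc and holomorphic inside. If the zeros of `f` in
the open disc are divided out by Blaschke factors, a square root of the quotient is such an `h`. -/
def HasSqrtMajorant (f : ℂ → ℂ) : Prop :=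
  ∃ h : ℂ → ℂ, DiffContOnCl ℂ h (ball 0 1) ∧ (∀ z ∈ closedBall 0 1, ‖f z‖ ≤ ‖h z‖ ^ 2) ∧
    ∀ z ∈ sphere 0 1, ‖f z‖ = ‖h z‖ ^ 2

lemma norm_cpow_inv_two_sq (w : ℂ) : ‖w ^ (2⁻¹ : ℂ)‖ ^ 2 = ‖w‖ := by
  rw [← norm_pow]
  exact_mod_cast congrArg norm (Complex.cpow_nat_inv_pow w two_ne_zero)

lemma one_sub_mul_re_nonneg {a z : ℂ} (ha : ‖a‖ ≤ 1) (hz : z ∈ closedBall 0 1) :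
    0 ≤ (1 - a * z).re := by
  rw [mem_closedBall_zero_iff] at hz
  have h_norm : ‖a * z‖ ≤ 1 := by simpa using mul_le_one₀ ha (norm_nonneg z) hz
  simpa using (Complex.re_le_norm _).trans h_norm

lemma one_sub_mul_mem_slitPlane {a z : ℂ} (ha : ‖a‖ ≤ 1) (hz : z ∈ ball 0 1) :
    1 - a * z ∈ Complex.slitPlane := by
  rw [mem_ball_zero_iff] at hz
  have h_norm : ‖a * z‖ < 1 := by
    simpa using (mul_le_of_le_one_left (norm_nonneg z) ha).trans_lt hz
  exact .inl (by simpa using (Complex.re_le_norm _).trans_lt h_norm)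

lemma diffContOnCl_one_sub_mul_cpow {a w : ℂ} (ha : ‖a‖ ≤ 1) (hw : 0 < w.re) :
    DiffContOnCl ℂ (fun z ↦ (1 - a * z) ^ w) (ball 0 1) := by
  refine ⟨fun z hz ↦ ?_, fun z hz ↦ ?_⟩
  · have h_base : DifferentiableAt ℂ (fun z ↦ 1 - a * z) z := by fun_prop
    exact (h_base.cpow_const (one_sub_mul_mem_slitPlane ha hz)).differentiableWithinAt
  · rw [closure_ball 0 one_ne_zero] at hz
    have h_base : 0 ≤ (1 - a * z).re ∨ (1 - a * z).im ≠ 0 := .inl (one_sub_mul_re_nonneg ha hz)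
    have h_cont : ContinuousAt (fun z ↦ 1 - a * z) z := by fun_prop
    exact (ContinuousAt.comp (f := fun z ↦ 1 - a * z)
      (Complex.continuousAt_cpow_const_of_re_pos h_base hw) h_cont).continuousWithinAt

lemma norm_one_sub_conj_mul_sq_sub_norm_sub_sq (r z : ℂ) :
    ‖1 - conj r * z‖ ^ 2 - ‖z - r‖ ^ 2 = (1 - ‖z‖ ^ 2) * (1 - ‖r‖ ^ 2) := by
  simp only [Complex.sq_norm, Complex.normSq_apply, Complex.sub_re, Complex.sub_im,
    Complex.mul_re, Complex.mul_im, Complex.one_re, Complex.one_im, Complex.conj_re,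
    Complex.conj_im]
  ring

lemma setAverage_mono_on {X : Type*} [MeasurableSpace X] {μ : Measure X} {s : Set X}
    {f g : X → ℝ} (hf : IntegrableOn f s μ) (hg : IntegrableOn g s μ) (hs : MeasurableSet s)
    (h_le : ∀ x ∈ s, f x ≤ g x) : ⨍ x in s, f x ∂μ ≤ ⨍ x in s, g x ∂μ := by
  simp only [setAverage_eq, smul_eq_mul]
  exact mul_le_mul_of_nonneg_left (setIntegral_mono_on hf hg hs h_le) (by positivity)

namespace HasSqrtMajorant

variable {f g : ℂ → ℂ}

lemma mul (hf : HasSqrtMajorant f) (hg : HasSqrtMajorant g) :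
    HasSqrtMajorant fun z ↦ f z * g z := by
  obtain ⟨h, hh, h_le, h_eq⟩ := hf
  obtain ⟨k, hk, k_le, k_eq⟩ := hg
  refine ⟨fun z ↦ h z * k z, hh.smul hk, fun z hz ↦ ?_, fun z hz ↦ ?_⟩
  · rw [norm_mul, norm_mul, mul_pow]
    exact mul_le_mul (h_le z hz) (k_le z hz) (norm_nonneg _) (sq_nonneg _)
  · rw [norm_mul, norm_mul, mul_pow, h_eq z hz, k_eq z hz]

lemma const (a : ℂ) : HasSqrtMajorant fun _ ↦ a :=
  ⟨fun _ ↦ a ^ (2⁻¹ : ℂ), diffContOnCl_const, fun _ _ ↦ (norm_cpow_inv_two_sq a).ge,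
    fun _ _ ↦ (norm_cpow_inv_two_sq a).symm⟩

lemma one_sub_mul {a : ℂ} (ha : ‖a‖ ≤ 1) : HasSqrtMajorant fun z ↦ 1 - a * z :=
  ⟨fun z ↦ (1 - a * z) ^ (2⁻¹ : ℂ), diffContOnCl_one_sub_mul_cpow ha (by norm_num),
    fun _ _ ↦ (norm_cpow_inv_two_sq _).ge, fun _ _ ↦ (norm_cpow_inv_two_sq _).symm⟩

lemma of_norm_le (hg : HasSqrtMajorant g) (h_le : ∀ z ∈ closedBall 0 1, ‖f z‖ ≤ ‖g z‖)
    (h_eq : ∀ z ∈ sphere 0 1, ‖f z‖ = ‖g z‖) : HasSqrtMajorant f := by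
  obtain ⟨h, hh, hg_le, hg_eq⟩ := hg
  exact ⟨h, hh, fun z hz ↦ (h_le z hz).trans (hg_le z hz),
    fun z hz ↦ (h_eq z hz).trans (hg_eq z hz)⟩

lemma sub_const (r : ℂ) : HasSqrtMajorant fun z ↦ z - r := by
  rcases le_or_gt ‖r‖ 1 with hr | hr
  · refine (one_sub_mul (a := conj r) (by simpa using hr)).of_norm_le
      (fun z hz ↦ ?_) fun z hz ↦ ?_
    · have h_diff := norm_one_sub_conj_mul_sq_sub_norm_sub_sq r z
      rw [mem_closedBall_zero_iff] at hz
      have h_nonneg : 0 ≤ (1 - ‖z‖ ^ 2) * (1 - ‖r‖ ^ 2) :=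
        mul_nonneg (by simpa [sq_le_one_iff_abs_le_one]) (by simpa [sq_le_one_iff_abs_le_one])
      exact le_of_sq_le_sq (by linarith) (norm_nonneg _)
    · have h_diff := norm_one_sub_conj_mul_sq_sub_norm_sub_sq r z
      rw [mem_sphere_zero_iff_norm] at hz
      rw [hz, one_pow, sub_self, zero_mul, sub_eq_zero] at h_diff
      exact ((sq_eq_sq₀ (norm_nonneg _) (norm_nonneg _)).1 h_diff).symm
  · have hr₀ : r ≠ 0 := norm_pos_iff.1 (one_pos.trans hr)
    have h_inv : ‖r⁻¹‖ ≤ 1 := by simpa using inv_le_one_of_one_le₀ hr.le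
    convert (const (-r)).mul (one_sub_mul h_inv) using 2 with z
    field_simp
    ring

lemma multiset_prod (s : Multiset (ℂ → ℂ)) (hs : ∀ f ∈ s, HasSqrtMajorant f) :
    HasSqrtMajorant s.prod :=
  Multiset.prod_induction _ _ (fun _ _ ↦ mul) (const 1) hs

theorem polynomial_eval (p : ℂ[X]) : HasSqrtMajorant fun z ↦ p.eval z := by
  have h_prod : (fun z ↦ p.eval z) =
      (fun _ ↦ p.leadingCoeff) * (p.roots.map fun r z ↦ z - r).prod := by
    ext z
    conv_lhs => rw [(IsAlgClosed.splits p).eq_prod_roots]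
    simp [eval_multiset_prod, Pi.multiset_prod_apply, Multiset.map_map]
  rw [h_prod]
  refine (const _).mul (multiset_prod _ fun f hf ↦ ?_)
  obtain ⟨r, -, rfl⟩ := Multiset.mem_map.1 hf
  exact sub_const r

theorem setAverage_norm_sq_le (hf : HasSqrtMajorant f) (hf_cont : ContinuousOn f (closedBall 0 1)) :
    ⨍ z in ball (0 : ℂ) 1, ‖f z‖ ^ 2 ≤ circleAverage (fun z ↦ ‖f z‖) 0 1 ^ 2 := by
  obtain ⟨h, hh, h_le, h_eq⟩ := hf
  have h_cont := hh.continuousOn_ball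
  calc ⨍ z in ball (0 : ℂ) 1, ‖f z‖ ^ 2
      ≤ ⨍ z in ball (0 : ℂ) 1, ‖h z * h z‖ ^ 2 := by
        refine setAverage_mono_on
          (integrableOn_ball_of_continuousOn_closedBall (hf_cont.norm.pow 2))
          (integrableOn_ball_of_continuousOn_closedBall ((h_cont.mul h_cont).norm.pow 2))
          measurableSet_ball fun z hz ↦ ?_
        rw [norm_mul, ← sq]
        gcongr
        exact h_le z (ball_subset_closedBall hz)
    _ ≤ circleAverage (fun z ↦ ‖h z‖ ^ 2) 0 1 * circleAverage (fun z ↦ ‖h z‖ ^ 2) 0 1 :=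
        setAverage_norm_mul_sq_le hh hh
    _ = circleAverage (fun z ↦ ‖f z‖) 0 1 ^ 2 := by
        rw [← sq, circleAverage_congr_sphere fun z hz ↦ (h_eq z (by simpa using hz)).symm]

end HasSqrtMajorant

/-- **The Hardy space `H¹(𝕋)` embeds into the Bergman space `B₂(𝔻)` with constant 1.**
For every complex polynomial `f`,
`∫_𝔻 |f(z)|² dm(z) ≤ (∫_𝕋 |f(w)| dσ(w))²`, where `dm` is normalized area measure
on the unit disc and `dσ` is normalized arc-length on the unit circle. -/
theorem bergman_le_hardy (f : Polynomial ℂ) :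
    (1 / π) * ∫ z in Metric.ball (0 : ℂ) 1, ‖f.eval z‖ ^ 2
      ≤ ((1 / (2 * π)) *
          ∫ θ in (0 : ℝ)..(2 * π),
            ‖f.eval (Complex.exp (Complex.I * θ))‖) ^ 2 := by
  have h_disc : (1 / π) * ∫ z in ball (0 : ℂ) 1, ‖f.eval z‖ ^ 2 =
      ⨍ z in ball (0 : ℂ) 1, ‖f.eval z‖ ^ 2 := by
    rw [setAverage_eq, volume_real_ball_complex 0 zero_le_one, one_pow, mul_one, one_div,
      smul_eq_mul]
  have h_circle : (1 / (2 * π)) *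
      ∫ θ in (0 : ℝ)..(2 * π), ‖f.eval (Complex.exp (Complex.I * θ))‖ =
        circleAverage (fun z ↦ ‖f.eval z‖) 0 1 := by
    simp [circleAverage_def, circleMap, mul_comm Complex.I]
  rw [h_disc, h_circle]
  exact (HasSqrtMajorant.polynomial_eval f).setAverage_norm_sq_le (by fun_prop)
end

section
/- (Bayart's inequality.) Let m, N ≥ 1 and let P(z) = ∑_{|α|=m} c_α z^α be an m-homogeneous polynomial in N complex variables. Then (∑_{|α|=m} |c_α|²)^{1/2} ≤ 2^{m/2} ∫_{𝕋^N} |∑_{|α|=m} c_α w^α| dσ(w), where σ is the normalized Haar measure on the N-torus 𝕋^N. -/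
open Finset MeasureTheory Real

/-!
On the unit circle every polynomial `f` of one variable splits as `f = G H`, with `G` and `H` in the
analytic Wiener algebra and `|G|² = |H|² = |f|`. Indeed this property is multiplicative, so it
suffices to consider a linear factor: if its root is outside the open disc, then it is proportional
to `1 - b z` with `|b| ≤ 1`, which has a square root with absolutely summable coefficients; if the
root is inside, a Blaschke factor, unimodular on the circle, moves it outside. As the `k`-th
coefficient of `G H` is a sum of `k + 1` products, Cauchy–Schwarz and Parseval's identity for `G`
and `H` give Carleman's inequality `∑ |a_k|² / (k + 1) ≤ ‖f‖₁²`.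

By Minkowski's integral inequality, such lower bounds for `L¹`-norms pass from the factors to a
product of measure spaces, the weights being multiplied. On the torus this gives
`∑ |c_α|² / ∏ (α_j + 1) ≤ ‖P‖₁²`, and `∏ (α_j + 1) ≤ 2 ^ |α|`.
-/

open scoped PowerSeries

section Wiener

variable (𝕜 : Type*) [NormedField 𝕜]

/-- The analytic Wiener algebra: power series with absolutely summable coefficients. -/
def wienerAlgebra : Subalgebra 𝕜 𝕜⟦X⟧ where
  carrier := {F | Summable fun n => ‖PowerSeries.coeff n F‖}
  mul_mem' {F G} hF hG := by
    simpa only [Set.mem_ofPred_eq, PowerSeries.coeff_mul] using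
      summable_norm_sum_mul_antidiagonal_of_summable_norm hF hG
  add_mem' {F G} hF hG := (hF.add hG).of_nonneg_of_le (fun _ => norm_nonneg _) fun n => by
    simpa only [map_add] using norm_add_le _ _
  algebraMap_mem' c := summable_of_ne_finset_zero (s := {0}) fun n hn => by
    simp_all [PowerSeries.coeff_C]

namespace wienerAlgebra

variable {𝕜}

/-- The indeterminate, as an element of the Wiener algebra. -/
noncomputable def X : wienerAlgebra 𝕜 :=
  ⟨PowerSeries.X, summable_of_ne_finset_zero (s := {1}) fun n hn => by
    simp_all [PowerSeries.coeff_X]⟩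

@[simp] theorem coe_X : ((X : wienerAlgebra 𝕜) : 𝕜⟦X⟧) = PowerSeries.X := rfl

theorem coe_aeval_X (p : Polynomial 𝕜) :
    ((Polynomial.aeval X p : wienerAlgebra 𝕜) : 𝕜⟦X⟧) = p := by
  rw [← Subalgebra.coe_val, ← Polynomial.aeval_algHom_apply]
  exact Polynomial.eval₂_C_X_eq_coe

variable {A : Type*} [NormedRing A] [NormOneClass A] [NormedAlgebra 𝕜 A]

theorem summable_norm_coeff_smul_pow (F : wienerAlgebra 𝕜) {u : A} (hu : ‖u‖ ≤ 1) :
    Summable fun n => ‖PowerSeries.coeff n (F : 𝕜⟦X⟧) • u ^ n‖ :=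
  F.2.of_nonneg_of_le (fun _ => norm_nonneg _) fun n => by
    rw [norm_smul]
    exact mul_le_of_le_one_right (norm_nonneg _)
      ((norm_pow_le u n).trans (pow_le_one₀ (norm_nonneg _) hu))

/-- Substitution of an element of norm at most one of a Banach algebra into the series of the
Wiener algebra. -/
noncomputable def eval [CompleteSpace A] (u : A) (hu : ‖u‖ ≤ 1) : wienerAlgebra 𝕜 →ₐ[𝕜] A :=
  AlgHom.ofLinearMap
    { toFun F := ∑' n, PowerSeries.coeff n (F : 𝕜⟦X⟧) • u ^ n
      map_add' F G := by
        simp only [Subalgebra.coe_add, map_add, add_smul]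
        exact (summable_norm_coeff_smul_pow F hu).of_norm.tsum_add
          (summable_norm_coeff_smul_pow G hu).of_norm
      map_smul' c F := by
        simp only [Subalgebra.coe_smul, map_smul, smul_assoc, RingHom.id_apply]
        exact (summable_norm_coeff_smul_pow F hu).of_norm.tsum_const_smul c }
    (by
      change ∑' n, PowerSeries.coeff n (1 : 𝕜⟦X⟧) • u ^ n = 1
      rw [tsum_eq_single 0 fun n hn => by simp [PowerSeries.coeff_one, hn]]
      simp)
    fun F G => by
      change ∑' n, PowerSeries.coeff n (F * G : 𝕜⟦X⟧) • u ^ n = (∑' n, _) * ∑' n, _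
      rw [tsum_mul_tsum_eq_tsum_sum_antidiagonal_of_summable_norm
        (summable_norm_coeff_smul_pow F hu) (summable_norm_coeff_smul_pow G hu)]
      refine tsum_congr fun n => ?_
      rw [PowerSeries.coeff_mul, Finset.sum_smul]
      refine Finset.sum_congr rfl fun x hx => ?_
      rw [← mem_antidiagonal.1 hx, pow_add, smul_mul_smul_comm]

variable [CompleteSpace A]

theorem hasSum_eval (F : wienerAlgebra 𝕜) {u : A} (hu : ‖u‖ ≤ 1) :
    HasSum (fun n => PowerSeries.coeff n (F : 𝕜⟦X⟧) • u ^ n) (eval u hu F) :=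
  (summable_norm_coeff_smul_pow F hu).of_norm.hasSum

@[simp] theorem eval_X {u : A} (hu : ‖u‖ ≤ 1) : eval (𝕜 := 𝕜) u hu X = u := by
  refine (hasSum_eval X hu).unique ?_
  convert hasSum_single 1 fun n hn => ?_ <;> simp_all [PowerSeries.coeff_X]

theorem exists_mul_one_sub_smul_X_eq_one {b : 𝕜} (hb : ‖b‖ < 1) :
    ∃ F : wienerAlgebra 𝕜, F * (1 - b • X) = 1 := by
  refine ⟨⟨PowerSeries.mk fun n => b ^ n, ?_⟩, Subtype.ext ?_⟩
  · change Summable _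
    simpa only [PowerSeries.coeff_mk, norm_pow] using
      summable_geometric_of_lt_one (norm_nonneg _) hb
  · have := congrArg (PowerSeries.rescale b) (PowerSeries.mk_one_mul_one_sub_eq_one 𝕜)
    rw [map_mul, map_sub, map_one, PowerSeries.rescale_X, PowerSeries.rescale_mk] at this
    simpa [PowerSeries.smul_eq_C_mul] using this

end wienerAlgebra

end Wiener

section SquareRoot

theorem sum_range_catalan_div_four_pow (n : ℕ) :
    ∑ k ∈ range n, (catalan k : ℝ) / 4 ^ k = 2 - 2 * n.centralBinom / 4 ^ n := by
  induction n with
  | zero => simp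
  | succ n ih =>
    have hcatalan : (n.centralBinom : ℝ) = (n + 1) * catalan n := by
      exact_mod_cast (succ_mul_catalan_eq_centralBinom n).symm
    have hbinom : ((n + 1).centralBinom : ℝ) = 2 * (2 * n + 1) * catalan n := by
      have : ((n : ℝ) + 1) * (n + 1).centralBinom = 2 * (2 * n + 1) * n.centralBinom := by
        exact_mod_cast Nat.succ_mul_centralBinom_succ n
      apply mul_left_cancel₀ (by positivity : (n : ℝ) + 1 ≠ 0)
      rw [this, hcatalan]
      ring
    rw [sum_range_succ, ih, hbinom, hcatalan, pow_succ]
    field_simp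
    ring

theorem summable_catalan_div_four_pow : Summable fun n => (catalan n : ℝ) / 4 ^ n :=
  summable_of_sum_range_le (c := 2) (fun _ => by positivity) fun n => by
    rw [sum_range_catalan_div_four_pow]
    exact sub_le_self _ (by positivity)

namespace wienerAlgebra

variable {𝕜 : Type*} [RCLike 𝕜]

theorem exists_sq_mul_smul_X_add_one_eq {b : 𝕜} (hb : ‖b‖ ≤ 1) :
    ∃ K : wienerAlgebra 𝕜, K ^ 2 * ((b / 4) • X) + 1 = K := by
  refine ⟨⟨PowerSeries.rescale (b / 4)
    (PowerSeries.map (Nat.castRingHom 𝕜) PowerSeries.catalanSeries), ?_⟩, Subtype.ext ?_⟩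
  · refine summable_catalan_div_four_pow.of_nonneg_of_le (fun _ => norm_nonneg _) fun n => ?_
    have hpow : ‖b‖ ^ n ≤ 1 := pow_le_one₀ (norm_nonneg _) hb
    calc ‖PowerSeries.coeff n (PowerSeries.rescale (b / 4)
          (PowerSeries.map (Nat.castRingHom 𝕜) PowerSeries.catalanSeries))‖
        = ‖b‖ ^ n * (catalan n / 4 ^ n) := by
          simp [PowerSeries.coeff_rescale, div_pow, div_mul_eq_mul_div, mul_div_assoc]
      _ ≤ catalan n / 4 ^ n := mul_le_of_le_one_left (by positivity) hpow
  · have := congrArg (PowerSeries.rescale (b / 4) <| PowerSeries.map (Nat.castRingHom 𝕜) ·)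
      PowerSeries.catalanSeries_sq_mul_X_add_one
    simpa [PowerSeries.smul_eq_C_mul, mul_left_comm] using this

-- `√(1 - bX) = 1 - (bX / 2) K(bX / 4)`, with `K` the Catalan generating function.
theorem exists_mul_self_eq_one_sub_smul_X {b : 𝕜} (hb : ‖b‖ ≤ 1) :
    ∃ S : wienerAlgebra 𝕜, S * S = 1 - b • X := by
  obtain ⟨K, hK⟩ := exists_sq_mul_smul_X_add_one_eq hb
  have hb4 : b • X = 4 * ((b / 4) • X : wienerAlgebra 𝕜) := by
    rw [← map_ofNat (algebraMap 𝕜 _) 4, ← Algebra.smul_def, smul_smul,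
      show (4 : 𝕜) * (b / 4) = b by ring]
  refine ⟨1 - 2 * ((b / 4) • X) * K, ?_⟩
  rw [hb4]
  linear_combination (4 * ((b / 4) • X : wienerAlgebra 𝕜)) * hK

end wienerAlgebra

end SquareRoot

theorem hasSum_norm_sq_of_orthonormal {𝕜 E ι : Type*} [RCLike 𝕜] [SeminormedAddCommGroup E]
    [InnerProductSpace 𝕜 E] {v : ι → E} (hv : Orthonormal 𝕜 v) {a : ι → 𝕜} {x : E}
    (hx : HasSum (fun i => a i • v i) x) : HasSum (fun i => ‖a i‖ ^ 2) (‖x‖ ^ 2) :=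
  (hx.norm.pow 2).congr fun s => hv.orthogonalFamily.norm_sum a s

theorem norm_toLp_two_sq {α 𝕜 : Type*} [RCLike 𝕜] [TopologicalSpace α] [CompactSpace α]
    [MeasurableSpace α] [BorelSpace α] (μ : Measure α) [IsFiniteMeasure μ] (f : C(α, 𝕜)) :
    ‖f.toLp 2 μ 𝕜‖ ^ 2 = ∫ t, ‖f t‖ ^ 2 ∂μ := by
  rw [← RCLike.ofReal_inj (K := 𝕜), RCLike.ofReal_pow, ← inner_self_eq_norm_sq_to_K (𝕜 := 𝕜),
    ContinuousMap.inner_toLp, ← integral_ofReal]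
  simp [RCLike.mul_conj]

section Factorization

theorem norm_sub_eq_norm_one_sub_conj_mul {𝕜 : Type*} [RCLike 𝕜] (a : 𝕜) {z : 𝕜} (hz : ‖z‖ = 1) :
    ‖z - a‖ = ‖1 - starRingEnd 𝕜 a * z‖ := by
  have h : 1 - starRingEnd 𝕜 a * z = z * starRingEnd 𝕜 (z - a) := by
    rw [map_sub, mul_sub, RCLike.mul_conj, hz, RCLike.ofReal_one, one_pow, mul_comm z]
  rw [h, norm_mul, hz, one_mul, RCLike.norm_conj]

namespace wienerAlgebra

variable (T : ℝ) [Fact (0 < T)]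

/-- The sum of a series of the Wiener algebra as a function on the circle of length `T`, the
indeterminate being sent to the first character. -/
noncomputable def toAddCircle : wienerAlgebra ℂ →ₐ[ℂ] C(AddCircle T, ℂ) :=
  eval (fourier 1) (fourier_norm 1).le

theorem toAddCircle_X (t : AddCircle T) : toAddCircle T X t = AddCircle.toCircle t := by
  rw [toAddCircle, eval_X, fourier_one]

theorem toAddCircle_aeval_X (p : Polynomial ℂ) (t : AddCircle T) :
    toAddCircle T (Polynomial.aeval X p) t = p.eval (AddCircle.toCircle t : ℂ) := by
  rw [← Polynomial.aeval_algHom_apply, ← ContinuousMap.evalAlgHom_apply ℂ ℂ t,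
    ← Polynomial.aeval_algHom_apply, ContinuousMap.evalAlgHom_apply, toAddCircle_X]
  rfl

theorem hasSum_norm_sq_coeff (F : wienerAlgebra ℂ) :
    HasSum (fun k => ‖PowerSeries.coeff k (F : ℂ⟦X⟧)‖ ^ 2)
      (∫ t, ‖toAddCircle T F t‖ ^ 2 ∂AddCircle.haarAddCircle) := by
  rw [← norm_toLp_two_sq]
  refine hasSum_norm_sq_of_orthonormal
    ((orthonormal_fourier (T := T)).comp ((↑) : ℕ → ℤ) Nat.cast_injective) ?_
  have h := (hasSum_eval F (fourier_norm (T := T) 1).le).mapL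
    (ContinuousMap.toLp 2 AddCircle.haarAddCircle ℂ)
  have hpow (k : ℕ) : (fourier 1 : C(AddCircle T, ℂ)) ^ k = fourier k := by
    ext t
    simp [fourier_apply, AddCircle.toCircle_nsmul]
  simp only [map_smul, hpow] at h
  exact h

/-- The elements of the Wiener algebra which split into two factors of equal modulus on the circle,
so that the `L²`-norms of the factors are controlled by the `L¹`-norm of the product. -/
def balanced : Submonoid (wienerAlgebra ℂ) where
  carrier := {F | ∃ G H, G * H = F ∧ ∀ t, ‖toAddCircle T G t‖ = ‖toAddCircle T H t‖}
  mul_mem' := by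
    rintro _ _ ⟨G₁, H₁, rfl, h₁⟩ ⟨G₂, H₂, rfl, h₂⟩
    exact ⟨G₁ * G₂, H₁ * H₂, mul_mul_mul_comm .., fun t => by simp [h₁, h₂]⟩
  one_mem' := ⟨1, 1, one_mul 1, fun _ => rfl⟩

variable {T}

theorem mul_self_mem_balanced (S : wienerAlgebra ℂ) : S * S ∈ balanced T :=
  ⟨S, S, rfl, fun _ => rfl⟩

theorem mem_balanced_of_norm_eq_one {B : wienerAlgebra ℂ} (hB : ∀ t, ‖toAddCircle T B t‖ = 1) :
    B ∈ balanced T :=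
  ⟨B, 1, mul_one B, fun t => by simp [hB]⟩

theorem algebraMap_mem_balanced (c : ℂ) : algebraMap ℂ _ c ∈ balanced T := by
  obtain ⟨d, rfl⟩ := IsAlgClosed.exists_eq_mul_self c
  rw [map_mul]
  exact mul_self_mem_balanced _

theorem one_sub_smul_X_mem_balanced {b : ℂ} (hb : ‖b‖ ≤ 1) : 1 - b • X ∈ balanced T := by
  obtain ⟨S, hS⟩ := exists_mul_self_eq_one_sub_smul_X hb
  exact hS ▸ mul_self_mem_balanced S

theorem X_sub_algebraMap_mem_balanced (a : ℂ) : X - algebraMap ℂ _ a ∈ balanced T := by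
  obtain ha | ha := lt_or_ge ‖a‖ 1
  · have hconj : ‖starRingEnd ℂ a‖ < 1 := by rwa [RCLike.norm_conj]
    obtain ⟨F, hF⟩ := exists_mul_one_sub_smul_X_eq_one hconj
    have hBlaschke (t : AddCircle T) : ‖toAddCircle T ((X - algebraMap ℂ _ a) * F) t‖ = 1 := by
      have h := congrArg (fun G => ‖toAddCircle T G t‖) hF
      simp only [map_mul, map_sub, map_one, map_smul, AlgHom.commutes, ContinuousMap.mul_apply,
        ContinuousMap.sub_apply, ContinuousMap.smul_apply, ContinuousMap.one_apply,
        algebraMap_apply, toAddCircle_X, norm_mul, norm_one, smul_eq_mul,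
        mul_one] at h ⊢
      rw [norm_sub_eq_norm_one_sub_conj_mul a (Circle.norm_coe _), mul_comm, h]
    have hsplit : X - algebraMap ℂ _ a
        = (X - algebraMap ℂ _ a) * F * (1 - starRingEnd ℂ a • X) := by
      rw [mul_assoc, hF, mul_one]
    rw [hsplit]
    exact mul_mem (mem_balanced_of_norm_eq_one hBlaschke) (one_sub_smul_X_mem_balanced hconj.le)
  · have ha0 : a ≠ 0 := norm_pos_iff.1 (one_pos.trans_le ha)
    have hsplit : X - algebraMap ℂ (wienerAlgebra ℂ) a
        = algebraMap ℂ _ (-a) * (1 - a⁻¹ • X) := by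
      rw [mul_sub, mul_one, ← Algebra.smul_def, smul_smul, neg_mul, mul_inv_cancel₀ ha0, map_neg,
        neg_one_smul]
      ring
    rw [hsplit]
    exact mul_mem (algebraMap_mem_balanced _)
      (one_sub_smul_X_mem_balanced (by simpa using inv_le_one_of_one_le₀ ha))

theorem aeval_X_mem_balanced (p : Polynomial ℂ) : Polynomial.aeval X p ∈ balanced T := by
  rw [(IsAlgClosed.splits p).eq_prod_roots, map_mul, Polynomial.aeval_C, map_multiset_prod,
    Multiset.map_map]
  refine mul_mem (algebraMap_mem_balanced _) (multiset_prod_mem _ fun F hF => ?_)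
  obtain ⟨a, -, rfl⟩ := Multiset.mem_map.1 hF
  simpa using X_sub_algebraMap_mem_balanced a

end wienerAlgebra

end Factorization

section Carleman

theorem norm_sum_antidiagonal_mul_sq_div_le {R : Type*} [SeminormedRing R] (g h : ℕ → R) (n : ℕ) :
    ‖∑ x ∈ antidiagonal n, g x.1 * h x.2‖ ^ 2 / (n + 1)
      ≤ ∑ x ∈ antidiagonal n, ‖g x.1‖ ^ 2 * ‖h x.2‖ ^ 2 := by
  rw [div_le_iff₀' (by positivity)]
  calc ‖∑ x ∈ antidiagonal n, g x.1 * h x.2‖ ^ 2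
      ≤ (∑ x ∈ antidiagonal n, ‖g x.1‖ * ‖h x.2‖) ^ 2 := by
        gcongr
        exact norm_sum_le_of_le _ fun x _ => norm_mul_le _ _
    _ ≤ #(antidiagonal n) * ∑ x ∈ antidiagonal n, (‖g x.1‖ * ‖h x.2‖) ^ 2 :=
        sq_sum_le_card_mul_sum_sq
    _ = (n + 1) * ∑ x ∈ antidiagonal n, ‖g x.1‖ ^ 2 * ‖h x.2‖ ^ 2 := by
        simp only [Nat.card_antidiagonal, Nat.cast_succ, mul_pow]

theorem sum_norm_sum_antidiagonal_mul_sq_div_le {R : Type*} [SeminormedRing R] {g h : ℕ → R}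
    {a b : ℝ} (hg : HasSum (fun n => ‖g n‖ ^ 2) a) (hh : HasSum (fun n => ‖h n‖ ^ 2) b)
    (s : Finset ℕ) :
    ∑ n ∈ s, ‖∑ x ∈ antidiagonal n, g x.1 * h x.2‖ ^ 2 / (n + 1) ≤ a * b := by
  have hprod : Summable fun x : ℕ × ℕ => ‖g x.1‖ ^ 2 * ‖h x.2‖ ^ 2 :=
    hg.summable.mul_of_nonneg hh.summable (fun _ => sq_nonneg _) fun _ => sq_nonneg _
  have hconv : HasSum (fun n => ∑ x ∈ antidiagonal n, ‖g x.1‖ ^ 2 * ‖h x.2‖ ^ 2) (a * b) := by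
    rw [← hg.tsum_eq, ← hh.tsum_eq,
      hg.summable.tsum_mul_tsum_eq_tsum_sum_antidiagonal hh.summable hprod]
    exact (summable_sum_mul_antidiagonal_of_summable_mul (f := fun n => ‖g n‖ ^ 2)
      (g := fun n => ‖h n‖ ^ 2) hprod).hasSum
  exact (sum_le_sum fun n _ => norm_sum_antidiagonal_mul_sq_div_le g h n).trans <|
    sum_le_hasSum s (fun _ _ => by positivity) hconv

variable {T : ℝ} [Fact (0 < T)]

theorem wienerAlgebra.sum_norm_sq_coeff_div_le {F : wienerAlgebra ℂ} (hF : F ∈ balanced T)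
    (s : Finset ℕ) :
    ∑ k ∈ s, ‖PowerSeries.coeff k (F : ℂ⟦X⟧)‖ ^ 2 / (k + 1)
      ≤ (∫ t, ‖toAddCircle T F t‖ ∂AddCircle.haarAddCircle) ^ 2 := by
  obtain ⟨G, H, rfl, hGH⟩ := hF
  have hG (t : AddCircle T) : ‖toAddCircle T (G * H) t‖ = ‖toAddCircle T G t‖ ^ 2 := by
    rw [map_mul, ContinuousMap.mul_apply, norm_mul, ← hGH, sq]
  have hH (t : AddCircle T) : ‖toAddCircle T (G * H) t‖ = ‖toAddCircle T H t‖ ^ 2 := by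
    rw [hG, hGH]
  have hGsum := hasSum_norm_sq_coeff T G
  have hHsum := hasSum_norm_sq_coeff T H
  simp only [← hG] at hGsum
  simp only [← hH] at hHsum
  simpa only [Subalgebra.coe_mul, PowerSeries.coeff_mul, sq] using
    sum_norm_sum_antidiagonal_mul_sq_div_le hGsum hHsum s

theorem sum_norm_sq_coeff_div_le_sq_integral (p : Polynomial ℂ) (s : Finset ℕ) :
    ∑ k ∈ s, ‖p.coeff k‖ ^ 2 / (k + 1)
      ≤ (∫ t : AddCircle T, ‖p.eval (AddCircle.toCircle t : ℂ)‖ ∂AddCircle.haarAddCircle) ^ 2 := by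
  simpa only [wienerAlgebra.coe_aeval_X, Polynomial.coeff_coe, wienerAlgebra.toAddCircle_aeval_X]
    using wienerAlgebra.sum_norm_sq_coeff_div_le (wienerAlgebra.aeval_X_mem_balanced (T := T) p) s

theorem integral_Icc_comp_exp {E : Type*} [NormedAddCommGroup E] [NormedSpace ℝ E]
    [Fact (0 < 2 * π)] (f : ℂ → E) :
    ∫ θ in Set.Icc 0 (2 * π), f (Complex.exp (Complex.I * θ))
      = (2 * π) • ∫ t : AddCircle (2 * π), f (AddCircle.toCircle t) ∂AddCircle.haarAddCircle := by
  rw [AddCircle.integral_haarAddCircle, smul_inv_smul₀ two_pi_pos.ne',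
    ← AddCircle.integral_preimage (2 * π) 0, zero_add, integral_Icc_eq_integral_Ioc]
  simp only [AddCircle.toCircle_apply_mk, div_self two_pi_pos.ne', one_mul, Circle.coe_exp,
    mul_comm Complex.I]

end Carleman

theorem sqrt_sum_sq_integral_le {X ι : Type*} [MeasurableSpace X] {μ : Measure X} {s : Finset ι}
    {f : ι → X → ℝ} (hf : ∀ i ∈ s, Integrable (f i) μ) :
    √(∑ i ∈ s, (∫ x, f i x ∂μ) ^ 2) ≤ ∫ x, √(∑ i ∈ s, f i x ^ 2) ∂μ := by
  have h := norm_integral_le_integral_norm (μ := μ)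
    fun x => (WithLp.toLp 2 fun i : s => f i x : EuclideanSpace ℝ s)
  have hsum (x : X) : ∑ i : s, f i x ^ 2 = ∑ i ∈ s, f i x ^ 2 := sum_coe_sort s (f · x ^ 2)
  simpa only [EuclideanSpace.norm_eq, Real.norm_eq_abs, sq_abs,
    eval_integral_piLp (q := 2) (f := fun x => WithLp.toLp 2 fun i : s => f i x) fun i => hf i i.2,
    sum_coe_sort s fun i => (∫ x, f i x ∂μ) ^ 2, hsum] using h

theorem integrable_sqrt_sum_sq {X ι : Type*} [MeasurableSpace X] {μ : Measure X} {s : Finset ι}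
    {f : ι → X → ℝ} (hf : ∀ i ∈ s, Integrable (f i) μ) :
    Integrable (fun x => √(∑ i ∈ s, f i x ^ 2)) μ := by
  have h : Integrable (fun x => (WithLp.toLp 2 fun i : s => f i x : EuclideanSpace ℝ s)) μ :=
    Integrable.of_eval_piLp fun i => hf i i.2
  have hsum (x : X) : ∑ i : s, f i x ^ 2 = ∑ i ∈ s, f i x ^ 2 := sum_coe_sort s (f · x ^ 2)
  simpa only [EuclideanSpace.norm_eq, Real.norm_eq_abs, sq_abs, hsum] using h.norm

/-- The family `φ` satisfies an `L¹` lower bound with weights `w`: the `L¹`-norm of every linear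
combination `∑ i ∈ s, a i * φ i` dominates the `ℓ²`-norm of its weighted coefficients `w i * a i`.
This is a one-sided, `L¹` substitute for orthogonality which passes to tensor products. -/
structure IsBesselianL1 {X ι 𝕜 : Type*} [RCLike 𝕜] [MeasurableSpace X] (μ : Measure X)
    (φ : ι → X → 𝕜) (w : ι → ℝ) : Prop where
  integrable (i : ι) : Integrable (φ i) μ
  sqrt_sum_le (s : Finset ι) (a : ι → 𝕜) :
    √(∑ i ∈ s, (w i * ‖a i‖) ^ 2) ≤ ∫ x, ‖∑ i ∈ s, a i * φ i x‖ ∂μ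

namespace IsBesselianL1

variable {X Y ι κ 𝕜 : Type*} [RCLike 𝕜] [MeasurableSpace X] [MeasurableSpace Y]
  {μ : Measure X} {ν : Measure Y} {φ : ι → X → 𝕜} {ψ : κ → Y → 𝕜} {w : ι → ℝ} {v : κ → ℝ}

theorem integrable_sum (hφ : IsBesselianL1 μ φ w) (s : Finset ι) (a : ι → 𝕜) :
    Integrable (fun x => ∑ i ∈ s, a i * φ i x) μ :=
  integrable_finsetSum s fun i _ => (hφ.integrable i).const_mul (a i)

theorem mul_sqrt_sum_le (hφ : IsBesselianL1 μ φ w) {s : Finset ι} {r : ℝ} (hr : 0 ≤ r)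
    (hrw : ∀ i ∈ s, r ≤ w i) (a : ι → 𝕜) :
    r * √(∑ i ∈ s, ‖a i‖ ^ 2) ≤ ∫ x, ‖∑ i ∈ s, a i * φ i x‖ ∂μ := by
  refine le_trans ?_ (hφ.sqrt_sum_le s a)
  rw [← sqrt_sq hr, ← sqrt_mul (sq_nonneg r), mul_sum]
  simp only [mul_pow]
  gcongr with i hi
  exact hrw i hi

theorem comp_measurePreserving (hφ : IsBesselianL1 μ φ w) {e : Y → X}
    (he : MeasurePreserving e ν μ) : IsBesselianL1 ν (fun i => φ i ∘ e) w where
  integrable i := he.integrable_comp_of_integrable (hφ.integrable i)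
  sqrt_sum_le s a := by
    refine (hφ.sqrt_sum_le s a).trans_eq ?_
    have hmeas := (hφ.integrable_sum s a).norm.aestronglyMeasurable
    rw [← he.map_eq] at hmeas ⊢
    exact integral_map he.aemeasurable hmeas

theorem comp_injective (hφ : IsBesselianL1 μ φ w) {f : κ → ι} (hf : f.Injective) :
    IsBesselianL1 μ (φ ∘ f) (w ∘ f) where
  integrable k := hφ.integrable (f k)
  sqrt_sum_le s a := by
    simpa only [sum_map, Function.Embedding.coeFn_mk, hf.extend_apply, Function.comp_apply] using
      hφ.sqrt_sum_le (s.map ⟨f, hf⟩) (f.extend a 0)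

theorem sqrt_sum_sq_mul_integral_le [SFinite μ] [SFinite ν] (hφ : IsBesselianL1 μ φ w)
    {s : Finset ι} {g : ι → Y → 𝕜} (hg : ∀ i, Integrable (g i) ν) :
    √(∑ i ∈ s, (w i * ∫ y, ‖g i y‖ ∂ν) ^ 2)
      ≤ ∫ z, ‖∑ i ∈ s, g i z.2 * φ i z.1‖ ∂μ.prod ν := by
  have hint : Integrable (fun z : X × Y => ‖∑ i ∈ s, g i z.2 * φ i z.1‖) (μ.prod ν) :=
    (integrable_finsetSum s fun i _ => by
      simpa only [mul_comm] using (hφ.integrable i).mul_prod (hg i)).norm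
  have hwg (i : ι) : Integrable (fun y => w i * ‖g i y‖) ν := (hg i).norm.const_mul _
  calc √(∑ i ∈ s, (w i * ∫ y, ‖g i y‖ ∂ν) ^ 2)
      = √(∑ i ∈ s, (∫ y, w i * ‖g i y‖ ∂ν) ^ 2) := by simp only [integral_const_mul]
    _ ≤ ∫ y, √(∑ i ∈ s, (w i * ‖g i y‖) ^ 2) ∂ν := sqrt_sum_sq_integral_le fun i _ => hwg i
    _ ≤ ∫ y, ∫ x, ‖∑ i ∈ s, g i y * φ i x‖ ∂μ ∂ν :=
        integral_mono (integrable_sqrt_sum_sq fun i _ => hwg i) hint.integral_prod_right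
          fun y => hφ.sqrt_sum_le s fun i => g i y
    _ = ∫ z, ‖∑ i ∈ s, g i z.2 * φ i z.1‖ ∂μ.prod ν := (integral_prod_symm _ hint).symm

theorem prod [SFinite μ] [SFinite ν] (hφ : IsBesselianL1 μ φ w) (hψ : IsBesselianL1 ν ψ v) :
    IsBesselianL1 (μ.prod ν) (fun (p : ι × κ) z => φ p.1 z.1 * ψ p.2 z.2)
      fun p => w p.1 * v p.2 where
  integrable p := (hφ.integrable p.1).mul_prod (hψ.integrable p.2)
  sqrt_sum_le s a := by
    classical
    let t (i : ι) : Finset κ := s.preimage (Prod.mk i) (Prod.mk_right_injective i).injOn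
    have hs (p : ι × κ) : p ∈ s ↔ p.1 ∈ s.image Prod.fst ∧ p.2 ∈ t p.1 := by
      simpa [t] using fun hp : p ∈ s => ⟨p.2, hp⟩
    have hfiber (i : ι) : ∑ j ∈ t i, (v j * ‖a (i, j)‖) ^ 2
        ≤ (∫ y, ‖∑ j ∈ t i, a (i, j) * ψ j y‖ ∂ν) ^ 2 :=
      (sqrt_le_left (by positivity)).1 (hψ.sqrt_sum_le (t i) fun j => a (i, j))
    calc √(∑ p ∈ s, (w p.1 * v p.2 * ‖a p‖) ^ 2)
        = √(∑ i ∈ s.image Prod.fst, w i ^ 2 * ∑ j ∈ t i, (v j * ‖a (i, j)‖) ^ 2) := by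
          simp only [sum_finset_product s _ t hs, mul_sum, mul_pow, mul_assoc]
      _ ≤ √(∑ i ∈ s.image Prod.fst, (w i * ∫ y, ‖∑ j ∈ t i, a (i, j) * ψ j y‖ ∂ν) ^ 2) := by
          simp only [mul_pow _ (∫ _, _ ∂ν)]
          gcongr with i
          exact hfiber i
      _ ≤ ∫ z, ‖∑ i ∈ s.image Prod.fst, (∑ j ∈ t i, a (i, j) * ψ j z.2) * φ i z.1‖ ∂μ.prod ν :=
          hφ.sqrt_sum_sq_mul_integral_le fun i => hψ.integrable_sum (t i) fun j => a (i, j)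
      _ = ∫ z, ‖∑ p ∈ s, a p * (φ p.1 z.1 * ψ p.2 z.2)‖ ∂μ.prod ν := by
          simp only [sum_finset_product s _ t hs, sum_mul, mul_assoc, mul_comm (φ _ _)]

theorem pi_of_isEmpty {η : Type*} [Fintype η] [IsEmpty η] {X ι : η → Type*}
    [∀ j, MeasurableSpace (X j)] (μ : ∀ j, Measure (X j)) (φ : ∀ j, ι j → X j → 𝕜)
    (w : ∀ j, ι j → ℝ) : IsBesselianL1 (Measure.pi μ)
      (fun (α : ∀ j, ι j) x => ∏ j, φ j (α j) (x j)) fun α => ∏ j, w j (α j) := by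
  rw [Measure.pi_of_empty μ isEmptyElim]
  refine ⟨fun α => by simp, fun s a => ?_⟩
  obtain rfl | hs := s.eq_empty_or_nonempty
  · simp
  · simp [hs.eq_univ]

theorem pi {n : ℕ} {X ι : Fin n → Type*} [∀ j, MeasurableSpace (X j)] {μ : ∀ j, Measure (X j)}
    [∀ j, SigmaFinite (μ j)] {φ : ∀ j, ι j → X j → 𝕜} {w : ∀ j, ι j → ℝ}
    (h : ∀ j, IsBesselianL1 (μ j) (φ j) (w j)) : IsBesselianL1 (Measure.pi μ)
      (fun (α : ∀ j, ι j) x => ∏ j, φ j (α j) (x j)) fun α => ∏ j, w j (α j) := by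
  induction n with
  | zero => exact pi_of_isEmpty μ φ w
  | succ n ih =>
    have hsplit := ((h 0).prod (ih fun j => h (Fin.succAbove 0 j))).comp_measurePreserving
      (measurePreserving_piFinSuccAbove μ 0) |>.comp_injective
      (Fin.insertNthEquiv ι 0).symm.injective
    simp only [Fin.prod_univ_succAbove _ (0 : Fin (n + 1))]
    exact hsplit

end IsBesselianL1

theorem isBesselianL1_exp_pow :
    IsBesselianL1 (volume.restrict (Set.Icc 0 (2 * π)))
      (fun (k : ℕ) θ => Complex.exp (Complex.I * θ) ^ k) fun k => 2 * π / √(k + 1) where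
  integrable k := Continuous.integrableOn_Icc (by fun_prop)
  sqrt_sum_le s a := by
    have : Fact (0 < 2 * π) := ⟨two_pi_pos⟩
    let p : Polynomial ℂ := ∑ k ∈ s, Polynomial.monomial k (a k)
    have hcoeff (k : ℕ) (hk : k ∈ s) : p.coeff k = a k := by
      simp [p, Polynomial.coeff_monomial, hk]
    have hCarleman : ∑ k ∈ s, ‖a k‖ ^ 2 / (k + 1)
        ≤ (∫ t : AddCircle (2 * π), ‖p.eval (AddCircle.toCircle t : ℂ)‖
            ∂AddCircle.haarAddCircle) ^ 2 := by
      refine (sum_congr rfl fun k hk => ?_).trans_le (sum_norm_sq_coeff_div_le_sq_integral p s)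
      rw [hcoeff k hk]
    calc √(∑ k ∈ s, (2 * π / √(k + 1) * ‖a k‖) ^ 2)
        = √((2 * π) ^ 2 * ∑ k ∈ s, ‖a k‖ ^ 2 / (k + 1)) := by
          congr 1
          rw [mul_sum]
          refine sum_congr rfl fun k _ => ?_
          rw [mul_pow, div_pow, sq_sqrt (by positivity)]
          ring
      _ ≤ 2 * π * ∫ t : AddCircle (2 * π), ‖p.eval (AddCircle.toCircle t : ℂ)‖
            ∂AddCircle.haarAddCircle := by
          refine sqrt_le_iff.2 ⟨by positivity, ?_⟩
          rw [mul_pow (2 * π) (∫ _, _ ∂_)]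
          gcongr
      _ = ∫ θ in Set.Icc 0 (2 * π), ‖∑ k ∈ s, a k * Complex.exp (Complex.I * θ) ^ k‖ := by
          rw [← smul_eq_mul, ← integral_Icc_comp_exp fun z => ‖p.eval z‖]
          simp only [p, Polynomial.eval_finsetSum, Polynomial.eval_monomial]

theorem prod_add_one_le_two_pow_sum {ι : Type*} (s : Finset ι) (α : ι → ℕ) :
    ∏ j ∈ s, (α j + 1) ≤ 2 ^ ∑ j ∈ s, α j := by
  rw [← prod_pow_eq_pow_sum]
  exact prod_le_prod' fun j _ => Nat.lt_two_pow_self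

theorem pow_card_div_sqrt_two_pow_sum_le_prod {ι : Type*} (s : Finset ι) {r : ℝ} (hr : 0 ≤ r)
    (α : ι → ℕ) : r ^ #s / √(2 ^ ∑ j ∈ s, α j) ≤ ∏ j ∈ s, r / √(α j + 1) := by
  rw [prod_div_distrib, prod_const, ← sqrt_prod _ (by intros; positivity)]
  gcongr
  exact_mod_cast prod_add_one_le_two_pow_sum s α

/-- **Bayart's inequality.** For an `m`-homogeneous polynomial
`P(z) = ∑_{|α|=m} c_α z^α` in `N` complex variables,
`(∑_{|α|=m} |c_α|²)^{1/2} ≤ 2^{m/2} ∫_{𝕋^N} |∑_{|α|=m} c_α w^α| dσ(w)`,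
the torus `𝕋^N` being parametrized by `w_j = e^{iθ_j}`, `θ ∈ [0,2π]^N`, with
normalized Haar measure `dσ = dθ/(2π)^N`. -/
theorem bayart_inequality (m N : ℕ) (hm : 1 ≤ m) (hN : 1 ≤ N)
    (c : (Fin N → ℕ) → ℂ) :
    Real.sqrt (∑ α ∈ Finset.Nat.antidiagonalTuple N m, ‖c α‖ ^ 2)
      ≤ 2 ^ ((m : ℝ) / 2) *
        ((1 / (2 * π) ^ N) *
          ∫ θ : Fin N → ℝ in Set.univ.pi fun _ => Set.Icc 0 (2 * π),
            ‖∑ α ∈ Finset.Nat.antidiagonalTuple N m,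
              c α * ∏ j, Complex.exp (Complex.I * θ j) ^ α j‖) := by
  have hweight (α : Fin N → ℕ) (hα : α ∈ Finset.Nat.antidiagonalTuple N m) :
      (2 * π) ^ N / √(2 ^ m) ≤ ∏ j, 2 * π / √(α j + 1) := by
    simpa only [card_fin, Finset.Nat.mem_antidiagonalTuple.1 hα] using
      pow_card_div_sqrt_two_pow_sum_le_prod univ two_pi_pos.le α
  have hbound := (IsBesselianL1.pi fun _ : Fin N => isBesselianL1_exp_pow).mul_sqrt_sum_le
    (by positivity) hweight c
  rw [← Measure.restrict_pi_pi, ← volume_pi] at hbound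
  have hpow : (2 : ℝ) ^ ((m : ℝ) / 2) = √(2 ^ m) := by
    rw [sqrt_eq_rpow, ← rpow_natCast_mul two_pos.le, mul_one_div]
  rwa [hpow, ← div_le_iff₀' (by positivity), one_div_mul_eq_div, le_div_iff₀' (by positivity),
    mul_div_left_comm, mul_comm]
end

section
/- (Blei's inequality.) Let m ≥ 2, N ≥ 1, and let (b_𝐢)_{𝐢 ∈ M(m,N)} be a family of complex numbers indexed by M(m,N) = {1,…,N}^m. Then (∑_{𝐢 ∈ M(m,N)} |b_𝐢|^{2m/(m+1)})^{(m+1)/(2m)} ≤ ∏_{k=1}^m ( ∑_{j=1}^N ( ∑_{𝐢 ∈ M(m-1,N)} |b_{(𝐢,_k j)}|² )^{1/2} )^{1/m}. -/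
/-!
Let `f` be a nonnegative function on a product of `m` finite sets, let `S k j` be its sum over the
fiber `{i | i k = j}`, let `0 < s ≤ 1` and put `θ = s / (1 + (m - 1) * s)`. If the fiber sums are
positive, then
`f i ^ (m * θ) = (∏ k, S k (i k) ^ s) ^ (1 - m * θ) * ∏ k, (f i / S k (i k) ^ (1 - s)) ^ θ`.
The exponents `1 - m * θ, θ, ..., θ` add up to `1`, so Hölder's inequality bounds the sum of the
right side over `i`. The base of the first factor sums to `∏ k, ∑ j, S k j ^ s` by distributivity;
the `k`-th quotient sums to `∑ j, S k j ^ s`, as one sees fiber by fiber. Blei's inequality is the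
case `f i = ‖b i‖ ^ 2`, `s = 1 / 2`.
-/

open Finset

open scoped NNReal

theorem sum_rpow_mul_prod_rpow_le {ι κ : Type*} (s : Finset ι) (t : Finset κ) (g : ι → ℝ≥0)
    (f : κ → ι → ℝ≥0) {q : ℝ} {p : κ → ℝ} (hq : 0 ≤ q) (hp : ∀ k ∈ t, 0 ≤ p k)
    (hqp : q + ∑ k ∈ t, p k = 1) :
    ∑ i ∈ s, g i ^ q * ∏ k ∈ t, f k i ^ p k ≤
      (∑ i ∈ s, g i) ^ q * ∏ k ∈ t, (∑ i ∈ s, f k i) ^ p k := by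
  let _ : MeasurableSpace ι := ⊤
  have coe_prod_rpow (x : κ → ℝ≥0) :
      ((∏ k ∈ t, x k ^ p k : ℝ≥0) : ENNReal) = ∏ k ∈ t, (x k : ENNReal) ^ p k := by
    rw [ENNReal.ofNNReal_finsetProd]
    exact prod_congr rfl fun k hk => ENNReal.coe_rpow_of_nonneg _ (hp k hk)
  have holder := ENNReal.lintegral_mul_prod_norm_pow_le
    (μ := MeasureTheory.Measure.count.restrict (s : Set ι)) t (g := fun i => (g i : ENNReal))
    (f := fun k i => (f k i : ENNReal)) measurable_from_top.aemeasurable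
    (fun _ _ => measurable_from_top.aemeasurable) q hqp hq hp
  simp only [MeasureTheory.lintegral_finset, MeasureTheory.Measure.count_singleton, mul_one,
    ← ENNReal.coe_rpow_of_nonneg _ hq, ← coe_prod_rpow, ← ENNReal.ofNNReal_finsetSum,
    ← ENNReal.coe_mul] at holder
  exact ENNReal.coe_le_coe.mp holder

theorem sum_filter_apply_eq_sum_insertNth {n : ℕ} {α : Fin (n + 1) → Type*} [∀ k, Fintype (α k)]
    {M : Type*} [AddCommMonoid M] (k : Fin (n + 1)) [DecidableEq (α k)] (j : α k)
    (f : (∀ l, α l) → M) :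
    ∑ i with i k = j, f i = ∑ i, f (k.insertNth j i) := by
  rw [sum_filter, ← (Fin.insertNthEquiv α k).sum_comp, Fintype.sum_prod_type_right]
  simp [Fin.insertNthEquiv]

theorem sum_div_fiber_sum_rpow {ι κ : Type*} [Fintype ι] [Fintype κ] [DecidableEq κ] (π : ι → κ)
    (f : ι → ℝ≥0) {s : ℝ} (hs : s ≠ 0) :
    ∑ i, f i / (∑ i' with π i' = π i, f i') ^ (1 - s) = ∑ j, (∑ i with π i = j, f i) ^ s := by
  rw [← sum_fiberwise univ π]
  refine sum_congr rfl fun j _ => ?_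
  calc ∑ i with π i = j, f i / (∑ i' with π i' = π i, f i') ^ (1 - s)
      = ∑ i with π i = j, f i / (∑ i' with π i' = j, f i') ^ (1 - s) :=
        sum_congr rfl fun i hi => by rw [(mem_filter.mp hi).2]
    _ = (∑ i with π i = j, f i) ^ (1 - (1 - s)) := by
        rw [← sum_div, NNReal.rpow_one_sub' (y := 1 - s) (by simpa using hs)]
    _ = (∑ i with π i = j, f i) ^ s := by rw [sub_sub_cancel]

theorem prod_rpow_rpow_mul_prod_div_rpow {κ : Type*} [Fintype κ] {a : ℝ≥0} {S : κ → ℝ≥0}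
    (hS : ∀ k, S k = 0 → a = 0) (s c : ℝ) {θ : ℝ} (hθ : θ ≠ 0) (hc : s * c = (1 - s) * θ) :
    (∏ k, S k ^ s) ^ c * ∏ k, (a / S k ^ (1 - s)) ^ θ = a ^ (Fintype.card κ * θ) := by
  have factor (k : κ) : (S k ^ s) ^ c * (a / S k ^ (1 - s)) ^ θ = a ^ θ := by
    rw [← NNReal.rpow_mul, hc, NNReal.rpow_mul, ← NNReal.mul_rpow]
    rcases eq_or_ne (S k) 0 with hk | hk
    · simp [hS k hk, NNReal.zero_rpow hθ]
    · rw [mul_div_cancel₀ _ (NNReal.rpow_pos (pos_iff_ne_zero.mpr hk)).ne']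
  rw [← NNReal.finsetProd_rpow, ← prod_mul_distrib, prod_congr rfl fun k _ => factor k,
    prod_const, card_univ, mul_comm, NNReal.rpow_mul, NNReal.rpow_natCast]

theorem sum_rpow_le_prod_sum_fiber_rpow {κ : Type*} [Fintype κ] [DecidableEq κ] [Nonempty κ]
    {α : κ → Type*} [∀ k, Fintype (α k)] [∀ k, DecidableEq (α k)] (f : (∀ k, α k) → ℝ≥0) {s : ℝ}
    (hs₀ : 0 < s) (hs₁ : s ≤ 1) :
    ∑ i, f i ^ (Fintype.card κ * (s / (1 + (Fintype.card κ - 1) * s))) ≤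
      (∏ k, ∑ j : α k, (∑ i with i k = j, f i) ^ s) ^ (1 / (1 + (Fintype.card κ - 1) * s)) := by
  set m : ℝ := (Fintype.card κ : ℝ) with hm_def
  set D := 1 + (m - 1) * s with hD
  have hm : 1 ≤ m := Nat.one_le_cast.mpr Fintype.card_pos
  have hD_pos : 0 < D := by nlinarith
  have weight_nonneg : 0 ≤ (1 - s) / D := div_nonneg (sub_nonneg.mpr hs₁) hD_pos.le
  have weights_sum : (1 - s) / D + ∑ _k : κ, s / D = 1 := by
    rw [sum_const, card_univ, nsmul_eq_mul, ← hm_def]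
    field_simp
    rw [hD]
    ring
  let S (k : κ) (j : α k) : ℝ≥0 := ∑ i with i k = j, f i
  have eq_zero_of_fiber_sum (i : ∀ k, α k) (k : κ) (h : S k (i k) = 0) : f i = 0 :=
    sum_eq_zero_iff.mp h i (by simp)
  calc ∑ i, f i ^ (m * (s / D))
      = ∑ i, (∏ k, S k (i k) ^ s) ^ ((1 - s) / D) *
          ∏ k, (f i / S k (i k) ^ (1 - s)) ^ (s / D) :=
        sum_congr rfl fun i _ => (prod_rpow_rpow_mul_prod_div_rpow (eq_zero_of_fiber_sum i) _ _
          (by positivity) (by ring)).symm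
    _ ≤ (∑ i : ∀ k, α k, ∏ k, S k (i k) ^ s) ^ ((1 - s) / D) *
          ∏ k, (∑ i, f i / S k (i k) ^ (1 - s)) ^ (s / D) :=
        sum_rpow_mul_prod_rpow_le _ _ _ _ weight_nonneg (fun _ _ => by positivity) weights_sum
    _ = (∏ k, ∑ j, S k j ^ s) ^ ((1 - s) / D) * (∏ k, ∑ j, S k j ^ s) ^ (s / D) := by
        rw [← Fintype.prod_sum fun k j => S k j ^ s, NNReal.finsetProd_rpow]
        simp only [S, sum_div_fiber_sum_rpow (fun i : ∀ k, α k => i _) f hs₀.ne']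
    _ = (∏ k, ∑ j, S k j ^ s) ^ (1 / D) := by
        rw [← NNReal.rpow_add_of_nonneg _ weight_nonneg (by positivity), ← add_div, sub_add_cancel]

theorem blei_inequality_general {κ : Type*} [Fintype κ] [DecidableEq κ] [Nonempty κ]
    {α : κ → Type*} [∀ k, Fintype (α k)] [∀ k, DecidableEq (α k)] {E : Type*}
    [SeminormedAddGroup E] (b : (∀ k, α k) → E) {q : ℝ} (hq : 1 ≤ q) :
    (∑ i, ‖b i‖ ^ (q * Fintype.card κ / (Fintype.card κ + q - 1))) ^
        ((Fintype.card κ + q - 1) / (q * Fintype.card κ)) ≤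
      ∏ k, (∑ j : α k, (∑ i with i k = j, ‖b i‖ ^ q) ^ (1 / q)) ^
        (1 / (Fintype.card κ : ℝ)) := by
  have hm : (1 : ℝ) ≤ Fintype.card κ := Nat.one_le_cast.mpr Fintype.card_pos
  have fiber_bound := sum_rpow_le_prod_sum_fiber_rpow (fun i => ‖b i‖₊ ^ q) (s := 1 / q)
    (by positivity) (by rw [div_le_one (by positivity)]; exact hq)
  set m : ℝ := (Fintype.card κ : ℝ)
  have hd : 0 < m + q - 1 := by linarith
  have denom_eq : 1 + (m - 1) * (1 / q) = (m + q - 1) / q := by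
    field_simp
    ring
  have exponent_eq : q * (m * (1 / q / ((m + q - 1) / q))) = q * m / (m + q - 1) := by field_simp
  have root_eq : 1 / ((m + q - 1) / q) * ((m + q - 1) / (q * m)) = 1 / m := by field_simp
  simp only [denom_eq, ← NNReal.rpow_mul, exponent_eq] at fiber_bound
  have root_bound := NNReal.rpow_le_rpow fiber_bound (z := (m + q - 1) / (q * m)) (by positivity)
  rw [← NNReal.rpow_mul, root_eq, ← NNReal.finsetProd_rpow] at root_bound
  simp only [← coe_nnnorm]
  exact_mod_cast root_bound

/-- **Blei's inequality.** For `m = n+1 ≥ 2` and a family `(b_𝐢)` of complex numbers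
indexed by `𝐢 ∈ M(m,N) = {1,…,N}^m`:
`(∑_𝐢 |b_𝐢|^{2m/(m+1)})^{(m+1)/(2m)}
  ≤ ∏_{k=1}^m (∑_{j=1}^N (∑_{𝐢 ∈ M(m-1,N)} |b_{(𝐢,_k j)}|²)^{1/2})^{1/m}`,
where `(𝐢,_k j)` inserts `j` in the `k`-th position of `𝐢`. -/
theorem blei_inequality (n N : ℕ) (hn : 1 ≤ n) (hN : 1 ≤ N)
    (b : (Fin (n + 1) → Fin N) → ℂ) :
    (∑ i : Fin (n + 1) → Fin N,
        ‖b i‖ ^ ((2 * ((n : ℝ) + 1)) / ((n : ℝ) + 2)))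
        ^ (((n : ℝ) + 2) / (2 * ((n : ℝ) + 1)))
      ≤ ∏ k : Fin (n + 1),
          (∑ j : Fin N, Real.sqrt (∑ i : Fin n → Fin N,
              ‖b (Fin.insertNth k j i)‖ ^ 2)) ^ (1 / ((n : ℝ) + 1)) := by
  simpa [sum_filter_apply_eq_sum_insertNth, Real.sqrt_eq_rpow,
    show (n : ℝ) + 1 + 2 - 1 = n + 2 by ring] using blei_inequality_general b one_le_two
end
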